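/- arXiv:math/9910142 — 13 statements merged into one kernel-verified Lean document; each statement's English description precedes it below -/
import Mathlib

section
/- Let α ∈ ℝ, let D ⊆ ℝ² be open, and let u : ℝ² → ℝ be C² on D and satisfy the Țițeica PDE with parameter α at every point of D. Then for every ε ∈ ℝ the function v(x,y) = e^{-ε} · u(e^{-ε} x, y) is C² and satisfies the Țițeica PDE with the same parameter α at every point (x,y) such that (e^{-ε} x, y) ∈ D. -/
/-- Partial derivative with respect to the first variable. -/
noncomputable def pdx (u : ℝ × ℝ → ℝ) (p : ℝ × ℝ) : ℝ :=
  deriv (fun x => u (x, p.2)) p.1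

/-- Partial derivative with respect to the second variable. -/
noncomputable def pdy (u : ℝ × ℝ → ℝ) (p : ℝ × ℝ) : ℝ :=
  deriv (fun y => u (p.1, y)) p.2

/-- The Țițeica PDE with parameter `α` holds for `u` at the point `p`:
`u_xx · u_yy − u_xy² = α · (x·u_x + y·u_y − u)⁴`. -/
def TiteicaPDE (α : ℝ) (u : ℝ × ℝ → ℝ) (p : ℝ × ℝ) : Prop :=
  pdx (pdx u) p * pdy (pdy u) p - (pdy (pdx u) p) ^ 2
    = α * (p.1 * pdx u p + p.2 * pdy u p - u p) ^ 4

theorem pdx_scale (k c : ℝ) (w : ℝ × ℝ → ℝ) :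
    pdx (fun q : ℝ × ℝ => k * w (c * q.1, q.2)) =
      fun q : ℝ × ℝ => (k * c) * pdx w (c * q.1, q.2) := by
  funext q
  simp only [pdx]
  rw [deriv_const_mul_field, deriv_comp_mul_left c (fun x => w (x, q.2)) q.1, smul_eq_mul,
    mul_assoc]

theorem pdy_scale (k c : ℝ) (w : ℝ × ℝ → ℝ) :
    pdy (fun q : ℝ × ℝ => k * w (c * q.1, q.2)) =
      fun q : ℝ × ℝ => k * pdy w (c * q.1, q.2) := by
  funext q
  simp only [pdy]
  rw [deriv_const_mul_field]

/-- The scaling group generated by `X₁ = x ∂/∂x − u ∂/∂u` is a symmetry group of the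
Țițeica PDE: if `u` is a C² solution on the open set `D`, then for every `ε` the function
`v(x,y) = e^{-ε} · u(e^{-ε} x, y)` is C² and solves the PDE wherever `(e^{-ε} x, y) ∈ D`. -/
theorem titeica_symmetry_X1 (α ε : ℝ) (D : Set (ℝ × ℝ)) (hD : IsOpen D)
    (u : ℝ × ℝ → ℝ) (hu : ContDiffOn ℝ 2 u D)
    (hsol : ∀ p ∈ D, TiteicaPDE α u p) :
    ContDiffOn ℝ 2 (fun p : ℝ × ℝ => Real.exp (-ε) * u (Real.exp (-ε) * p.1, p.2))
      {p : ℝ × ℝ | (Real.exp (-ε) * p.1, p.2) ∈ D} ∧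
    ∀ p : ℝ × ℝ, (Real.exp (-ε) * p.1, p.2) ∈ D →
      TiteicaPDE α (fun q : ℝ × ℝ => Real.exp (-ε) * u (Real.exp (-ε) * q.1, q.2)) p := by
  constructor
  · refine contDiffOn_const.mul (hu.comp (t := D) (ContDiff.contDiffOn ?_) ?_)
    · fun_prop
    · intro p hp
      exact hp
  · intro p hp
    have h := hsol _ hp
    generalize Real.exp (-ε) = c at *
    simp only [TiteicaPDE] at h ⊢
    simp only [pdx_scale, pdy_scale]
    linear_combination c ^ 4 * h
end

section
/- Let α ∈ ℝ, let D ⊆ ℝ² be open, and let u : ℝ² → ℝ be C² on D and satisfy the Țițeica PDE with parameter α at every point of D. Then for every ε ∈ ℝ the function v(x,y) = u(x − ε·y, y) is C² and satisfies the Țițeica PDE with the same parameter α at every point (x,y) such that (x − ε·y, y) ∈ D. -/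
lemma pdx_eq_fderiv {u : ℝ × ℝ → ℝ} {p : ℝ × ℝ} (h : DifferentiableAt ℝ u p) :
    pdx u p = fderiv ℝ u p (1, 0) := by
  have h1 : HasDerivAt (fun x : ℝ => (x, p.2)) ((1 : ℝ), (0 : ℝ)) p.1 :=
    (hasDerivAt_id p.1).prodMk (hasDerivAt_const p.1 p.2)
  exact (HasFDerivAt.comp_hasDerivAt (f := fun x : ℝ => (x, p.2)) p.1 h.hasFDerivAt h1).deriv

lemma pdy_eq_fderiv {u : ℝ × ℝ → ℝ} {p : ℝ × ℝ} (h : DifferentiableAt ℝ u p) :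
    pdy u p = fderiv ℝ u p (0, 1) := by
  have h1 : HasDerivAt (fun y : ℝ => (p.1, y)) ((0 : ℝ), (1 : ℝ)) p.2 :=
    (hasDerivAt_const p.2 p.1).prodMk (hasDerivAt_id p.2)
  exact (HasFDerivAt.comp_hasDerivAt (f := fun y : ℝ => (p.1, y)) p.2 h.hasFDerivAt h1).deriv

lemma pdx_shear (ε : ℝ) (u : ℝ × ℝ → ℝ) (p : ℝ × ℝ) :
    pdx (fun q : ℝ × ℝ => u (q.1 - ε * q.2, q.2)) p = pdx u (p.1 - ε * p.2, p.2) :=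
  deriv_comp_sub_const (f := fun x => u (x, p.2)) (ε * p.2) p.1

lemma pdy_shear (ε : ℝ) {u : ℝ × ℝ → ℝ} {p : ℝ × ℝ}
    (h : DifferentiableAt ℝ u (p.1 - ε * p.2, p.2)) :
    pdy (fun q : ℝ × ℝ => u (q.1 - ε * q.2, q.2)) p
      = pdy u (p.1 - ε * p.2, p.2) - ε * pdx u (p.1 - ε * p.2, p.2) := by
  have h1 : HasDerivAt (fun y : ℝ => (p.1 - ε * y, y)) (-(ε * 1), (1 : ℝ)) p.2 :=
    (((hasDerivAt_id p.2).const_mul ε).const_sub p.1).prodMk (hasDerivAt_id p.2)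
  have h2 := (HasFDerivAt.comp_hasDerivAt (f := fun y : ℝ => (p.1 - ε * y, y)) p.2
    h.hasFDerivAt h1).deriv
  rw [pdy_eq_fderiv h, pdx_eq_fderiv h]
  refine Eq.trans h2 ?_
  have h3 : ((-(ε * 1), (1 : ℝ)) : ℝ × ℝ) = (0, 1) - ε • ((1 : ℝ), (0 : ℝ)) := by
    ext <;> simp
  rw [h3, map_sub, map_smul, smul_eq_mul]

lemma pdx_congr {u v : ℝ × ℝ → ℝ} {p : ℝ × ℝ} (h : u =ᶠ[nhds p] v) : pdx u p = pdx v p := by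
  have hc : Filter.Tendsto (fun x : ℝ => (x, p.2)) (nhds p.1) (nhds p) :=
    Continuous.tendsto (f := fun x : ℝ => (x, p.2)) (by fun_prop) p.1
  exact Filter.EventuallyEq.deriv_eq (hc.eventually h)

lemma pdy_congr {u v : ℝ × ℝ → ℝ} {p : ℝ × ℝ} (h : u =ᶠ[nhds p] v) : pdy u p = pdy v p := by
  have hc : Filter.Tendsto (fun y : ℝ => (p.1, y)) (nhds p.2) (nhds p) :=
    Continuous.tendsto (f := fun y : ℝ => (p.1, y)) (by fun_prop) p.2
  exact Filter.EventuallyEq.deriv_eq (hc.eventually h)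

lemma second_order {u : ℝ × ℝ → ℝ} {p : ℝ × ℝ} (h : ContDiffAt ℝ 2 u p) :
    DifferentiableAt ℝ (pdx u) p ∧ DifferentiableAt ℝ (pdy u) p ∧
      pdx (pdy u) p = pdy (pdx u) p := by
  have hd : ∀ᶠ q in nhds p, DifferentiableAt ℝ u q :=
    (h.eventually (by simp)).mono fun q hq => hq.differentiableAt (by simp)
  have ex : pdx u =ᶠ[nhds p] fun q => fderiv ℝ u q (1, 0) := hd.mono fun q hq => pdx_eq_fderiv hq
  have ey : pdy u =ᶠ[nhds p] fun q => fderiv ℝ u q (0, 1) := hd.mono fun q hq => pdy_eq_fderiv hq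
  have hf : DifferentiableAt ℝ (fderiv ℝ u) p :=
    (h.fderiv_right (m := 1) (by norm_num)).differentiableAt (by simp)
  have key : ∀ w : ℝ × ℝ, HasFDerivAt (fun q => fderiv ℝ u q w)
      ((fderiv ℝ (fderiv ℝ u) p).flip w) p := fun w => by
    simpa using hf.hasFDerivAt.clm_apply (hasFDerivAt_const w p)
  refine ⟨(key _).differentiableAt.congr_of_eventuallyEq ex,
    (key _).differentiableAt.congr_of_eventuallyEq ey, ?_⟩
  rw [pdx_congr ey, pdy_congr ex, pdx_eq_fderiv (key _).differentiableAt,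
    pdy_eq_fderiv (key _).differentiableAt, (key _).fderiv, (key _).fderiv]
  have hs : IsSymmSndFDerivAt ℝ u p := h.isSymmSndFDerivAt (by simp)
  exact hs.eq _ _

/-- The shear group generated by `X₃ = y ∂/∂x` is a symmetry group of the Țițeica PDE:
if `u` is a C² solution on the open set `D`, then for every `ε` the function
`v(x,y) = u(x − ε·y, y)` is C² and solves the PDE wherever `(x − ε·y, y) ∈ D`. -/
theorem titeica_symmetry_X3 (α ε : ℝ) (D : Set (ℝ × ℝ)) (hD : IsOpen D)
    (u : ℝ × ℝ → ℝ) (hu : ContDiffOn ℝ 2 u D)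
    (hsol : ∀ p ∈ D, TiteicaPDE α u p) :
    ContDiffOn ℝ 2 (fun p : ℝ × ℝ => u (p.1 - ε * p.2, p.2))
      {p : ℝ × ℝ | (p.1 - ε * p.2, p.2) ∈ D} ∧
    ∀ p : ℝ × ℝ, (p.1 - ε * p.2, p.2) ∈ D →
      TiteicaPDE α (fun q : ℝ × ℝ => u (q.1 - ε * q.2, q.2)) p := by
  have hS : ContDiff ℝ 2 (fun p : ℝ × ℝ => (p.1 - ε * p.2, p.2)) := by fun_prop
  refine ⟨hu.comp hS.contDiffOn fun p hp => hp, fun p hp => ?_⟩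
  have hat : ∀ q ∈ D, ContDiffAt ℝ 2 u q := fun q hq => hu.contDiffAt (hD.mem_nhds hq)
  have hdiff : ∀ q ∈ D, DifferentiableAt ℝ u q := fun q hq =>
    (hat q hq).differentiableAt (by simp)
  have hev : ∀ᶠ q in nhds p, (q.1 - ε * q.2, q.2) ∈ D :=
    (hS.continuous.tendsto p).eventually (hD.mem_nhds hp)
  obtain ⟨dx, dy, hsymm⟩ := second_order (hat _ hp)
  have e1 : pdx (fun q : ℝ × ℝ => u (q.1 - ε * q.2, q.2))
      = fun q : ℝ × ℝ => pdx u (q.1 - ε * q.2, q.2) := funext fun q => pdx_shear ε u q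
  have e2 : pdy (fun q : ℝ × ℝ => u (q.1 - ε * q.2, q.2)) =ᶠ[nhds p]
      fun q : ℝ × ℝ => (fun r => pdy u r - ε * pdx u r) (q.1 - ε * q.2, q.2) :=
    hev.mono fun q hq => pdy_shear ε (hdiff _ hq)
  have hw := dy.hasFDerivAt.sub (dx.hasFDerivAt.const_mul ε)
  have hw' : DifferentiableAt ℝ (fun r => pdy u r - ε * pdx u r) (p.1 - ε * p.2, p.2) :=
    hw.differentiableAt
  have hwf : fderiv ℝ (fun r => pdy u r - ε * pdx u r) (p.1 - ε * p.2, p.2) = _ := hw.fderiv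
  have hyy : pdy (pdy (fun q : ℝ × ℝ => u (q.1 - ε * q.2, q.2))) p
      = pdy (pdy u) (p.1 - ε * p.2, p.2) - 2 * ε * pdy (pdx u) (p.1 - ε * p.2, p.2)
        + ε ^ 2 * pdx (pdx u) (p.1 - ε * p.2, p.2) := by
    rw [pdy_congr e2, pdy_shear ε hw', pdy_eq_fderiv hw', pdx_eq_fderiv hw', hwf]
    rw [pdx_eq_fderiv dy, pdy_eq_fderiv dx] at hsymm
    rw [pdy_eq_fderiv dy, pdy_eq_fderiv dx, pdx_eq_fderiv dx]
    simp only [ContinuousLinearMap.sub_apply, ContinuousLinearMap.smul_apply, smul_eq_mul]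
    rw [hsymm]
    ring
  have h0 := hsol _ hp
  unfold TiteicaPDE at h0 ⊢
  rw [hyy, e1, pdx_shear, pdy_shear ε dx, pdy_shear ε (hdiff _ hp)]
  simp only at h0 ⊢
  linear_combination h0
end

section
/- Let α ∈ ℝ, let D ⊆ ℝ² be open, and let u : ℝ² → ℝ be C² on D and satisfy the Țițeica PDE with parameter α at every point of D. Then for every ε ∈ ℝ the function v(x,y) = u(x, y − ε·x) is C² and satisfies the Țițeica PDE with the same parameter α at every point (x,y) such that (x, y − ε·x) ∈ D. -/
lemma pdx_of_hasFDerivAt {w : ℝ × ℝ → ℝ} {p : ℝ × ℝ} {L : ℝ × ℝ →L[ℝ] ℝ}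
    (h : HasFDerivAt w L p) : pdx w p = L (1, 0) := by
  have h1 : HasDerivAt (fun x : ℝ => ((x, p.2) : ℝ × ℝ)) (1, 0) p.1 :=
    (hasDerivAt_id p.1).prodMk (hasDerivAt_const p.1 p.2)
  exact (HasFDerivAt.comp_hasDerivAt (f := fun x : ℝ => ((x, p.2) : ℝ × ℝ)) p.1 h h1).deriv

lemma pdy_of_hasFDerivAt {w : ℝ × ℝ → ℝ} {p : ℝ × ℝ} {L : ℝ × ℝ →L[ℝ] ℝ}
    (h : HasFDerivAt w L p) : pdy w p = L (0, 1) := by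
  have h1 : HasDerivAt (fun y : ℝ => ((p.1, y) : ℝ × ℝ)) (0, 1) p.2 :=
    (hasDerivAt_const p.2 p.1).prodMk (hasDerivAt_id p.2)
  exact (HasFDerivAt.comp_hasDerivAt (f := fun y : ℝ => ((p.1, y) : ℝ × ℝ)) p.2 h h1).deriv

/-- The shear map. -/
noncomputable def shear (ε : ℝ) : ℝ × ℝ →L[ℝ] ℝ × ℝ :=
  (ContinuousLinearMap.fst ℝ ℝ ℝ).prod
    (ContinuousLinearMap.snd ℝ ℝ ℝ - ε • ContinuousLinearMap.fst ℝ ℝ ℝ)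

lemma shear_apply (ε : ℝ) (p : ℝ × ℝ) : shear ε p = (p.1, p.2 - ε * p.1) := by
  simp [shear]

lemma pd_shear (ε : ℝ) {w v : ℝ × ℝ → ℝ} {p : ℝ × ℝ} 
    (hw : DifferentiableAt ℝ w (shear ε p))
    (hv : v =ᶠ[nhds p] fun q => w (shear ε q)) :
    pdx v p = pdx w (shear ε p) - ε * pdy w (shear ε p) ∧
    pdy v p = pdy w (shear ε p) := by
  have h := (hw.hasFDerivAt.comp p (shear ε).hasFDerivAt).congr_of_eventuallyEq hv
  rw [pdx_of_hasFDerivAt h, pdy_of_hasFDerivAt h, pdx_of_hasFDerivAt hw.hasFDerivAt,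
    pdy_of_hasFDerivAt hw.hasFDerivAt]
  simp only [ContinuousLinearMap.comp_apply, shear_apply]
  refine ⟨?_, by simp⟩
  have : ((1 : ℝ), (0 : ℝ) - ε * 1) = (1, 0) - ε • ((0 : ℝ), (1 : ℝ)) := by simp
  rw [this, map_sub, map_smul, smul_eq_mul]

theorem titeica_symmetry_X5 (α ε : ℝ) (D : Set (ℝ × ℝ)) (hD : IsOpen D)
    (u : ℝ × ℝ → ℝ) (hu : ContDiffOn ℝ 2 u D)
    (hsol : ∀ p ∈ D, TiteicaPDE α u p) :
    ContDiffOn ℝ 2 (fun p : ℝ × ℝ => u (p.1, p.2 - ε * p.1))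
      {p : ℝ × ℝ | (p.1, p.2 - ε * p.1) ∈ D} ∧
    ∀ p : ℝ × ℝ, (p.1, p.2 - ε * p.1) ∈ D →
      TiteicaPDE α (fun q : ℝ × ℝ => u (q.1, q.2 - ε * q.1)) p := by
  simp only [← shear_apply]
  refine ⟨hu.comp (shear ε).contDiff.contDiffOn fun p hp => hp, fun p hp => ?_⟩
  have hCA : ∀ q ∈ D, ContDiffAt ℝ 2 u q := fun q hq => hu.contDiffAt (hD.mem_nhds hq)
  have hdiff : ∀ q ∈ D, DifferentiableAt ℝ u q := fun q hq =>
    (hCA q hq).differentiableAt (by norm_num)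
  have hev : ∀ᶠ q in nhds p, shear ε q ∈ D :=
    (shear ε).continuous.continuousAt.eventually (hD.mem_nhds hp)
  have hvx : pdx (fun q => u (shear ε q)) =ᶠ[nhds p]
      fun q => (fun r => pdx u r - ε * pdy u r) (shear ε q) :=
    hev.mono fun q hq => (pd_shear ε (hdiff _ hq) Filter.EventuallyEq.rfl).1
  have hvy : pdy (fun q => u (shear ε q)) =ᶠ[nhds p] fun q => pdy u (shear ε q) :=
    hev.mono fun q hq => (pd_shear ε (hdiff _ hq) Filter.EventuallyEq.rfl).2
  have hC := hCA _ hp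
  have hsym := hC.isSymmSndFDerivAt (by simp)
  have hF : HasFDerivAt (fderiv ℝ u) (fderiv ℝ (fderiv ℝ u) (shear ε p)) (shear ε p) :=
    ((hC.fderiv_right (m := 1) (by norm_num)).differentiableAt (by norm_num)).hasFDerivAt
  have hxe : pdx u =ᶠ[nhds (shear ε p)] fun q => fderiv ℝ u q (1, 0) :=
    (hD.eventually_mem hp).mono fun q hq => pdx_of_hasFDerivAt (hdiff q hq).hasFDerivAt
  have hye : pdy u =ᶠ[nhds (shear ε p)] fun q => fderiv ℝ u q (0, 1) :=
    (hD.eventually_mem hp).mono fun q hq => pdy_of_hasFDerivAt (hdiff q hq).hasFDerivAt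
  have hX := (hF.clm_apply (hasFDerivAt_const ((1 : ℝ), (0 : ℝ)) _)).congr_of_eventuallyEq hxe
  have hY := (hF.clm_apply (hasFDerivAt_const ((0 : ℝ), (1 : ℝ)) _)).congr_of_eventuallyEq hye
  have hXY := hX.sub (hY.const_mul ε)
  have hXY' : HasFDerivAt (fun r => pdx u r - ε * pdy u r) _ (shear ε p) := hXY
  have e1 := pd_shear ε hXY'.differentiableAt hvx
  have e2 := pd_shear ε hY.differentiableAt hvy
  have e0 := pd_shear ε (hdiff _ hp) (Filter.EventuallyEq.rfl)
  have hs := hsol _ hp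
  have hsxy := hsym.eq (1, 0) (0, 1)
  unfold TiteicaPDE at hs ⊢
  rw [e1.1, e1.2, e2.2, e0.1, e0.2, pdx_of_hasFDerivAt hXY', pdy_of_hasFDerivAt hXY',
    pdy_of_hasFDerivAt hY]
  rw [pdx_of_hasFDerivAt hX, pdy_of_hasFDerivAt hX, pdy_of_hasFDerivAt hY] at hs
  simp at hs hsxy ⊢
  rw [hsxy] at *
  have h1 : (shear ε p).1 = p.1 := by rw [shear_apply]
  have h2 : (shear ε p).2 = p.2 - ε * p.1 := by rw [shear_apply]
  rw [h1, h2] at hs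
  linear_combination hs
end

section
/- Let α ∈ ℝ, let D ⊆ ℝ² be open, and let u : ℝ² → ℝ be C² on D and satisfy the Țițeica PDE with parameter α at every point of D. Then for every ε ∈ ℝ the function v(x,y) = u(x,y) + ε·x is C² and satisfies the Țițeica PDE with the same parameter α at every point of D. -/
/-- The group generated by `X₇ = x ∂/∂u` is a symmetry group of the Țițeica PDE:
if `u` is a C² solution on the open set `D`, then for every `ε` the function
`v(x,y) = u(x,y) + ε·x` is C² on `D` and solves the PDE at every point of `D`. -/
theorem titeica_symmetry_X7 (α ε : ℝ) (D : Set (ℝ × ℝ)) (hD : IsOpen D)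
    (u : ℝ × ℝ → ℝ) (hu : ContDiffOn ℝ 2 u D)
    (hsol : ∀ p ∈ D, TiteicaPDE α u p) :
    ContDiffOn ℝ 2 (fun p : ℝ × ℝ => u p + ε * p.1) D ∧
    ∀ p ∈ D, TiteicaPDE α (fun q : ℝ × ℝ => u q + ε * q.1) p := by
  have hy : pdy (fun q : ℝ × ℝ => u q + ε * q.1) = pdy u := by
    funext p
    simp only [pdy, deriv_add_const]
  have hx : ∀ p ∈ D, pdx (fun q : ℝ × ℝ => u q + ε * q.1) p = pdx u p + ε := by
    intro p hp
    have h1 : DifferentiableAt ℝ u (p.1, p.2) :=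
      (hu.differentiableOn (by norm_num)).differentiableAt (hD.mem_nhds hp)
    have h2 : DifferentiableAt ℝ (fun x : ℝ => (x, p.2)) p.1 := by fun_prop
    have h3 : DifferentiableAt ℝ (fun x : ℝ => u (x, p.2)) p.1 :=
      DifferentiableAt.comp p.1 h1 h2
    have h4 : HasDerivAt (fun x : ℝ => ε * x) ε p.1 := by
      simpa using (hasDerivAt_id p.1).const_mul ε
    exact (h3.hasDerivAt.add h4).deriv
  have hxx : ∀ p ∈ D, pdx (pdx (fun q : ℝ × ℝ => u q + ε * q.1)) p = pdx (pdx u) p := by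
    intro p hp
    have hc : ContinuousAt (fun x : ℝ => (x, p.2)) p.1 := by fun_prop
    have he : (fun x : ℝ => pdx (fun q : ℝ × ℝ => u q + ε * q.1) (x, p.2))
        =ᶠ[nhds p.1] fun x => pdx u (x, p.2) + ε :=
      (hc.eventually (hD.mem_nhds hp)).mono fun x h => hx _ h
    have := he.deriv_eq
    rw [deriv_add_const] at this
    exact this
  have hxy : ∀ p ∈ D, pdy (pdx (fun q : ℝ × ℝ => u q + ε * q.1)) p = pdy (pdx u) p := by
    intro p hp
    have hc : ContinuousAt (fun y : ℝ => (p.1, y)) p.2 := by fun_prop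
    have he : (fun y : ℝ => pdx (fun q : ℝ × ℝ => u q + ε * q.1) (p.1, y))
        =ᶠ[nhds p.2] fun y => pdx u (p.1, y) + ε :=
      (hc.eventually (hD.mem_nhds hp)).mono fun y h => hx _ h
    have := he.deriv_eq
    rw [deriv_add_const] at this
    exact this
  refine ⟨hu.add (by fun_prop), fun p hp => ?_⟩
  have h := hsol p hp
  unfold TiteicaPDE at h ⊢
  rw [hxx p hp, hxy p hp, hy, hx p hp, h]
  ring
end

section
/- Let α ∈ ℝ, let D ⊆ ℝ² be open, and let u : ℝ² → ℝ be C² on D and satisfy the Țițeica PDE with parameter α at every point of D. Then for every ε ∈ ℝ the function v(x,y) = u(x,y) + ε·y is C² and satisfies the Țițeica PDE with the same parameter α at every point of D. -/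
/-- The group generated by `X₈ = y ∂/∂u` is a symmetry group of the Țițeica PDE:
if `u` is a C² solution on the open set `D`, then for every `ε` the function
`v(x,y) = u(x,y) + ε·y` is C² on `D` and solves the PDE at every point of `D`. -/
theorem titeica_symmetry_X8 (α ε : ℝ) (D : Set (ℝ × ℝ)) (hD : IsOpen D)
    (u : ℝ × ℝ → ℝ) (hu : ContDiffOn ℝ 2 u D)
    (hsol : ∀ p ∈ D, TiteicaPDE α u p) :
    ContDiffOn ℝ 2 (fun p : ℝ × ℝ => u p + ε * p.2) D ∧
    ∀ p ∈ D, TiteicaPDE α (fun q : ℝ × ℝ => u q + ε * q.2) p := by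
  refine ⟨hu.add (by fun_prop), fun p hp => ?_⟩
  have hx : pdx (fun q : ℝ × ℝ => u q + ε * q.2) = pdx u := by
    funext q
    simp [pdx]
  have hy : ∀ q ∈ D, pdy (fun q : ℝ × ℝ => u q + ε * q.2) q = pdy u q + ε := by
    intro q hq
    have hd : DifferentiableAt ℝ u (q.1, q.2) :=
      (hu.contDiffAt (hD.mem_nhds hq)).differentiableAt (by norm_num)
    have h1 : DifferentiableAt ℝ (fun y => u (q.1, y)) q.2 :=
      DifferentiableAt.comp (g := u) (f := fun y : ℝ => (q.1, y)) q.2 hd (by fun_prop)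
    have h2 : HasDerivAt (fun y : ℝ => ε * y) ε q.2 := by
      simpa using (hasDerivAt_id q.2).const_mul ε
    exact (h1.hasDerivAt.add h2).deriv
  have hyy : pdy (pdy (fun q : ℝ × ℝ => u q + ε * q.2)) p = pdy (pdy u) p := by
    have hev : (fun y => pdy (fun q : ℝ × ℝ => u q + ε * q.2) (p.1, y))
        =ᶠ[nhds p.2] fun y => pdy u (p.1, y) + ε := by
      have hc : ContinuousAt (fun y : ℝ => (p.1, y)) p.2 := by fun_prop
      filter_upwards [hc.preimage_mem_nhds (hD.mem_nhds hp)] with y h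
      exact hy _ h
    have h := hev.deriv_eq
    rw [deriv_add_const] at h
    exact h
  have h := hsol p hp
  unfold TiteicaPDE at h ⊢
  rw [hx, hyy, hy p hp, h]
  ring
end

section
/- Let ζ, η, φ : ℝ³ → ℝ be C² functions of the variables (x,y,u) satisfying the system of partial differential equations: ζ_xy = 0, ζ_yy = 0, ζ_uu = 0, ζ_uy = 0; η_xx = 0, η_yy = 0, η_uu = 0, η_ux = 0; φ_xx = 0, φ_xy = 0, φ_yy = 0, φ_uy = 0; φ_uu = 2η_uy, φ_ux = η_xy, η_uy = ζ_ux, 2φ_xu = ζ_xx; together with 2φ − 2x·φ_x − 2y·φ_y − u·(φ_u − ζ_x − η_y) = 0, 2ζ − 2y·ζ_y − x·(ζ_x − η_y − φ_u) − 2u·ζ_u = 0, and 2η − 2x·η_x + y·(φ_u + ζ_x − η_y) − 2u·η_u = 0, all identically on ℝ³. Then there exist real constants C₁,…,C₈ such that ζ(x,y,u) = C₁·x + C₃·y + C₄·u, η(x,y,u) = C₅·x + C₂·y + C₆·u, and φ(x,y,u) = C₇·x + C₈·y − (C₁ + C₂)·u for all (x,y,u) ∈ ℝ³. -/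
/-- Partial derivative with respect to `x`, for a function of `(x, y, u) ∈ ℝ³`. -/
noncomputable def dX (F : ℝ × ℝ × ℝ → ℝ) (p : ℝ × ℝ × ℝ) : ℝ :=
  deriv (fun x => F (x, p.2.1, p.2.2)) p.1

/-- Partial derivative with respect to `y`, for a function of `(x, y, u) ∈ ℝ³`. -/
noncomputable def dY (F : ℝ × ℝ × ℝ → ℝ) (p : ℝ × ℝ × ℝ) : ℝ :=
  deriv (fun y => F (p.1, y, p.2.2)) p.2.1

/-- Partial derivative with respect to `u`, for a function of `(x, y, u) ∈ ℝ³`. -/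
noncomputable def dU (F : ℝ × ℝ × ℝ → ℝ) (p : ℝ × ℝ × ℝ) : ℝ :=
  deriv (fun u => F (p.1, p.2.1, u)) p.2.2

lemma tds_deriv (f : ℝ → ℝ) (a b c : ℝ) (hf : ∀ x, f x = a + b * x + c * x ^ 2) (x : ℝ) :
    deriv f x = b + 2 * c * x := by
  have h : f = fun x => a + b * x + c * x ^ 2 := funext hf
  rw [h]
  have h1 : HasDerivAt (fun x : ℝ => a + b * x + c * x ^ 2)
      (0 + b * 1 + c * (((2 : ℕ) : ℝ) * x ^ (2 - 1) * 1)) x :=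
    (((hasDerivAt_const x a).add ((hasDerivAt_id x).const_mul b)).add
      (((hasDerivAt_id x).pow 2).const_mul c))
  rw [h1.deriv]
  push_cast
  ring

lemma tds_const (f : ℝ → ℝ) (hf : Differentiable ℝ f) (c : ℝ) (h : ∀ x, deriv f x = c) (x : ℝ) :
    f x = f 0 + c * x := by
  have hg : Differentiable ℝ (fun x => f x - c * x) := by fun_prop
  have := is_const_of_deriv_eq_zero hg (fun y => by
    have h1 : HasDerivAt (fun x => f x - c * x) (deriv f y - c * 1) y :=
      (hf y).hasDerivAt.sub ((hasDerivAt_id y).const_mul c)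
    rw [h1.deriv, h]; ring) x 0
  linarith

lemma tds_quad (f : ℝ → ℝ) (hf : ContDiff ℝ 2 f) (c : ℝ) (h : ∀ x, deriv (deriv f) x = 2 * c)
    (x : ℝ) : f x = f 0 + deriv f 0 * x + c * x ^ 2 := by
  have hd : Differentiable ℝ f := hf.differentiable (by norm_num)
  have hd' : Differentiable ℝ (deriv f) := by
    have : ContDiff ℝ (1 + 1) f := by norm_num; exact hf
    exact (contDiff_succ_iff_deriv.1 this).2.2.differentiable (by norm_num)
  have h1 := tds_const _ hd' _ h
  have hg : Differentiable ℝ (fun x => f x - c * x ^ 2) := by fun_prop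
  have := tds_const _ hg (deriv f 0) (fun y => by
    have h2 : HasDerivAt (fun x => f x - c * x ^ 2)
        (deriv f y - c * (((2 : ℕ) : ℝ) * y ^ (2 - 1) * 1)) y :=
      (hd y).hasDerivAt.sub (((hasDerivAt_id y).pow 2).const_mul c)
    rw [h2.deriv, h1]; push_cast; ring) x
  linarith

lemma tds_affine (f : ℝ → ℝ) (hf : ContDiff ℝ 2 f) (h : ∀ x, deriv (deriv f) x = 0)
    (x : ℝ) : f x = f 0 + (f 1 - f 0) * x := by
  have h0 := tds_quad f hf 0 (by simpa using h)
  rw [h0 x, h0 1]; ring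

/-- The solution of the determining system for the infinitesimal symmetries of the
Țițeica surfaces PDE: any C² solution `(ζ, η, φ)` of the system is of the form
`ζ = C₁x + C₃y + C₄u`, `η = C₅x + C₂y + C₆u`, `φ = C₇x + C₈y − (C₁+C₂)u`. -/
theorem titeica_determining_system
    (ζ η φ : ℝ × ℝ × ℝ → ℝ)
    (hζ : ContDiff ℝ 2 ζ) (hη : ContDiff ℝ 2 η) (hφ : ContDiff ℝ 2 φ)
    -- ζ_xy = 0, ζ_yy = 0, ζ_uu = 0, ζ_uy = 0
    (h1 : ∀ p, dX (dY ζ) p = 0) (h2 : ∀ p, dY (dY ζ) p = 0)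
    (h3 : ∀ p, dU (dU ζ) p = 0) (h4 : ∀ p, dU (dY ζ) p = 0)
    -- η_xx = 0, η_yy = 0, η_uu = 0, η_ux = 0
    (h5 : ∀ p, dX (dX η) p = 0) (h6 : ∀ p, dY (dY η) p = 0)
    (h7 : ∀ p, dU (dU η) p = 0) (h8 : ∀ p, dU (dX η) p = 0)
    -- φ_xx = 0, φ_xy = 0, φ_yy = 0, φ_uy = 0
    (h9 : ∀ p, dX (dX φ) p = 0) (h10 : ∀ p, dX (dY φ) p = 0)
    (h11 : ∀ p, dY (dY φ) p = 0) (h12 : ∀ p, dU (dY φ) p = 0)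
    -- φ_uu = 2 η_uy, φ_ux = η_xy, η_uy = ζ_ux, 2 φ_xu = ζ_xx
    (h13 : ∀ p, dU (dU φ) p = 2 * dU (dY η) p)
    (h14 : ∀ p, dU (dX φ) p = dX (dY η) p)
    (h15 : ∀ p, dU (dY η) p = dU (dX ζ) p)
    (h16 : ∀ p, 2 * dX (dU φ) p = dX (dX ζ) p)
    -- 2φ − 2x φ_x − 2y φ_y − u (φ_u − ζ_x − η_y) = 0
    (h17 : ∀ p : ℝ × ℝ × ℝ,
      2 * φ p - 2 * p.1 * dX φ p - 2 * p.2.1 * dY φ p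
        - p.2.2 * (dU φ p - dX ζ p - dY η p) = 0)
    -- 2ζ − 2y ζ_y − x (ζ_x − η_y − φ_u) − 2u ζ_u = 0
    (h18 : ∀ p : ℝ × ℝ × ℝ,
      2 * ζ p - 2 * p.2.1 * dY ζ p - p.1 * (dX ζ p - dY η p - dU φ p)
        - 2 * p.2.2 * dU ζ p = 0)
    -- 2η − 2x η_x + y (φ_u + ζ_x − η_y) − 2u η_u = 0
    (h19 : ∀ p : ℝ × ℝ × ℝ,
      2 * η p - 2 * p.1 * dX η p + p.2.1 * (dU φ p + dX ζ p - dY η p)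
        - 2 * p.2.2 * dU η p = 0) :
    ∃ C₁ C₂ C₃ C₄ C₅ C₆ C₇ C₈ : ℝ, ∀ x y u : ℝ,
      ζ (x, y, u) = C₁ * x + C₃ * y + C₄ * u ∧
      η (x, y, u) = C₅ * x + C₂ * y + C₆ * u ∧
      φ (x, y, u) = C₇ * x + C₈ * y - (C₁ + C₂) * u := by
  have cx : ∀ (F : ℝ × ℝ × ℝ → ℝ), ContDiff ℝ 2 F → ∀ y u, ContDiff ℝ 2 (fun x => F (x, y, u)) :=
    fun F hF y u => by fun_prop
  have cy : ∀ (F : ℝ × ℝ × ℝ → ℝ), ContDiff ℝ 2 F → ∀ x u, ContDiff ℝ 2 (fun y => F (x, y, u)) :=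
    fun F hF x u => by fun_prop
  have cu : ∀ (F : ℝ × ℝ × ℝ → ℝ), ContDiff ℝ 2 F → ∀ x y, ContDiff ℝ 2 (fun u => F (x, y, u)) :=
    fun F hF x y => by fun_prop
  -- η is a polynomial
  have eta : ∃ b c d e k m : ℝ, ∀ x y u,
      η (x, y, u) = d + b * x + e * y + k * u + c * x * y + m * y * u := by
    have ax : ∀ x y u, η (x, y, u) = η (0, y, u) + (η (1, y, u) - η (0, y, u)) * x :=
      fun x y u => tds_affine _ (cx η hη y u) (fun x => h5 (x, y, u)) x
    have ay : ∀ x y u, η (x, y, u) = η (x, 0, u) + (η (x, 1, u) - η (x, 0, u)) * y :=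
      fun x y u => tds_affine _ (cy η hη x u) (fun y => h6 (x, y, u)) y
    have au : ∀ x y u, η (x, y, u) = η (x, y, 0) + (η (x, y, 1) - η (x, y, 0)) * u :=
      fun x y u => tds_affine _ (cu η hη x y) (fun u => h7 (x, y, u)) u
    have dx : ∀ x y u, dX η (x, y, u) = η (1, y, u) - η (0, y, u) := fun x y u => by
      have := tds_deriv (fun x => η (x, y, u)) (η (0, y, u)) (η (1, y, u) - η (0, y, u)) 0
        (fun x => by rw [ax x y u]; ring) x
      simpa [dX] using this
    have dux : ∀ y, (η (1, y, 1) - η (0, y, 1)) - (η (1, y, 0) - η (0, y, 0)) = 0 := fun y => by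
      have := tds_deriv (fun u => dX η (0, y, u)) (η (1, y, 0) - η (0, y, 0))
        ((η (1, y, 1) - η (0, y, 1)) - (η (1, y, 0) - η (0, y, 0))) 0
        (fun u => by rw [dx, au 1 y u, au 0 y u]; ring) 0
      have h := h8 (0, y, 0)
      simp only [dU] at h
      rw [h] at this
      linarith
    have d0 := dux 0
    have d1 := dux 1
    refine ⟨η (1,0,0) - η (0,0,0), η (1,1,0) - η (1,0,0) - η (0,1,0) + η (0,0,0), η (0,0,0),
      η (0,1,0) - η (0,0,0), η (0,0,1) - η (0,0,0),
      η (0,1,1) - η (0,1,0) - η (0,0,1) + η (0,0,0), fun x y u => ?_⟩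
    rw [ax x y u, ay 0 y u, ay 1 y u, au 0 0 u, au 1 0 u, au 0 1 u, au 1 1 u]
    linear_combination (x * u - x * u * y) * d0 + x * y * u * d1
  obtain ⟨b, c, d, e, k, m, eta⟩ := eta
  have ηx : ∀ x y u, dX η (x, y, u) = b + c * y := fun x y u => by
    have := tds_deriv (fun x => η (x, y, u)) (d + e * y + k * u + m * y * u) (b + c * y) 0
      (fun x => by rw [eta]; ring) x
    simpa [dX] using this
  have ηy : ∀ x y u, dY η (x, y, u) = e + c * x + m * u := fun x y u => by
    have := tds_deriv (fun y => η (x, y, u)) (d + b * x + k * u) (e + c * x + m * u) 0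
      (fun y => by rw [eta]; ring) y
    simpa [dY] using this
  have ηu : ∀ x y u, dU η (x, y, u) = k + m * y := fun x y u => by
    have := tds_deriv (fun u => η (x, y, u)) (d + b * x + e * y + c * x * y) (k + m * y) 0
      (fun u => by rw [eta]; ring) u
    simpa [dU] using this
  have ηxy : ∀ x y u, dX (dY η) (x, y, u) = c := fun x y u => by
    have := tds_deriv (fun x => dY η (x, y, u)) (e + m * u) c 0
      (fun x => by rw [ηy]; ring) x
    simpa [dX] using this
  have ηuy : ∀ x y u, dU (dY η) (x, y, u) = m := fun x y u => by
    have := tds_deriv (fun u => dY η (x, y, u)) (e + c * x) m 0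
      (fun u => by rw [ηy]; ring) u
    simpa [dU] using this
  -- φ is a polynomial
  have phi : ∃ q s t w : ℝ, ∀ x y u,
      φ (x, y, u) = w + s * x + q * y + t * u + c * x * u + m * u ^ 2 := by
    have ax : ∀ x y u, φ (x, y, u) = φ (0, y, u) + (φ (1, y, u) - φ (0, y, u)) * x :=
      fun x y u => tds_affine _ (cx φ hφ y u) (fun x => h9 (x, y, u)) x
    have ay : ∀ x y u, φ (x, y, u) = φ (x, 0, u) + (φ (x, 1, u) - φ (x, 0, u)) * y :=
      fun x y u => tds_affine _ (cy φ hφ x u) (fun y => h11 (x, y, u)) y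
    have dy : ∀ x y u, dY φ (x, y, u) = φ (x, 1, u) - φ (x, 0, u) := fun x y u => by
      have := tds_deriv (fun y => φ (x, y, u)) (φ (x, 0, u)) (φ (x, 1, u) - φ (x, 0, u)) 0
        (fun y => by rw [ay x y u]; ring) y
      simpa [dY] using this
    have dx : ∀ x y u, dX φ (x, y, u) = φ (1, y, u) - φ (0, y, u) := fun x y u => by
      have := tds_deriv (fun x => φ (x, y, u)) (φ (0, y, u)) (φ (1, y, u) - φ (0, y, u)) 0
        (fun x => by rw [ax x y u]; ring) x
      simpa [dX] using this
    have yx : ∀ x u, φ (x, 1, u) - φ (x, 0, u) = φ (0, 1, u) - φ (0, 0, u) := fun x u => by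
      have hd : Differentiable ℝ (fun x => φ (x, 1, u) - φ (x, 0, u)) :=
        ((cx φ hφ 1 u).sub (cx φ hφ 0 u)).differentiable (by norm_num)
      have := tds_const _ hd 0 (fun x => by
        have := h10 (x, 0, u); simp only [dX, dy] at this; exact this) x
      simpa using this
    have yu : ∀ u, φ (0, 1, u) - φ (0, 0, u) = φ (0, 1, 0) - φ (0, 0, 0) := fun u => by
      have hd : Differentiable ℝ (fun u => φ (0, 1, u) - φ (0, 0, u)) :=
        ((cu φ hφ 0 1).sub (cu φ hφ 0 0)).differentiable (by norm_num)
      have := tds_const _ hd 0 (fun u => by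
        have := h12 (0, 0, u); simp only [dU, dy] at this; exact this) u
      simpa using this
    have xu : ∀ u, φ (1, 0, u) - φ (0, 0, u) = φ (1, 0, 0) - φ (0, 0, 0) + c * u := fun u => by
      have hd : Differentiable ℝ (fun u => φ (1, 0, u) - φ (0, 0, u)) :=
        ((cu φ hφ 1 0).sub (cu φ hφ 0 0)).differentiable (by norm_num)
      exact tds_const _ hd c (fun u => by
        have := h14 (0, 0, u); rw [ηxy] at this; simp only [dU, dx] at this; exact this) u
    have uu := tds_quad _ (cu φ hφ 0 0) m (fun u => by
      have := h13 (0, 0, u); rw [ηuy] at this; exact this)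
    refine ⟨φ (0,1,0) - φ (0,0,0), φ (1,0,0) - φ (0,0,0), deriv (fun u => φ (0, 0, u)) 0,
      φ (0,0,0), fun x y u => ?_⟩
    have e1 := uu u
    rw [ay x y u, yx x u, yu u, ax x 0 u, xu u, e1]
    ring
  obtain ⟨q, s, t, w, phi⟩ := phi
  have φx : ∀ x y u, dX φ (x, y, u) = s + c * u := fun x y u => by
    have := tds_deriv (fun x => φ (x, y, u)) (w + q * y + t * u + m * u ^ 2) (s + c * u) 0
      (fun x => by rw [phi]; ring) x
    simpa [dX] using this
  have φy : ∀ x y u, dY φ (x, y, u) = q := fun x y u => by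
    have := tds_deriv (fun y => φ (x, y, u)) (w + s * x + t * u + c * x * u + m * u ^ 2) q 0
      (fun y => by rw [phi]; ring) y
    simpa [dY] using this
  have φu : ∀ x y u, dU φ (x, y, u) = t + c * x + 2 * m * u := fun x y u => by
    have := tds_deriv (fun u => φ (x, y, u)) (w + s * x + q * y) (t + c * x) m
      (fun u => by rw [phi]; ring) u
    simpa [dU] using this
  have φxu : ∀ x y u, dX (dU φ) (x, y, u) = c := fun x y u => by
    have := tds_deriv (fun x => dU φ (x, y, u)) (t + 2 * m * u) c 0
      (fun x => by rw [φu]; ring) x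
    simpa [dX] using this
  -- ζ is a polynomial
  have zeta : ∃ a v n l : ℝ, ∀ x y u,
      ζ (x, y, u) = l + n * x + a * y + v * u + m * x * u + c * x ^ 2 := by
    have ay : ∀ x y u, ζ (x, y, u) = ζ (x, 0, u) + (ζ (x, 1, u) - ζ (x, 0, u)) * y :=
      fun x y u => tds_affine _ (cy ζ hζ x u) (fun y => h2 (x, y, u)) y
    have au : ∀ x y u, ζ (x, y, u) = ζ (x, y, 0) + (ζ (x, y, 1) - ζ (x, y, 0)) * u :=
      fun x y u => tds_affine _ (cu ζ hζ x y) (fun u => h3 (x, y, u)) u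
    have dy : ∀ x y u, dY ζ (x, y, u) = ζ (x, 1, u) - ζ (x, 0, u) := fun x y u => by
      have := tds_deriv (fun y => ζ (x, y, u)) (ζ (x, 0, u)) (ζ (x, 1, u) - ζ (x, 0, u)) 0
        (fun y => by rw [ay x y u]; ring) y
      simpa [dY] using this
    have yx : ∀ x u, ζ (x, 1, u) - ζ (x, 0, u) = ζ (0, 1, u) - ζ (0, 0, u) := fun x u => by
      have hd : Differentiable ℝ (fun x => ζ (x, 1, u) - ζ (x, 0, u)) :=
        ((cx ζ hζ 1 u).sub (cx ζ hζ 0 u)).differentiable (by norm_num)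
      have := tds_const _ hd 0 (fun x => by
        have := h1 (x, 0, u); simp only [dX, dy] at this; exact this) x
      simpa using this
    have yu : ∀ u, ζ (0, 1, u) - ζ (0, 0, u) = ζ (0, 1, 0) - ζ (0, 0, 0) := fun u => by
      have hd : Differentiable ℝ (fun u => ζ (0, 1, u) - ζ (0, 0, u)) :=
        ((cu ζ hζ 0 1).sub (cu ζ hζ 0 0)).differentiable (by norm_num)
      have := tds_const _ hd 0 (fun u => by
        have := h4 (0, 0, u); simp only [dU, dy] at this; exact this) u
      simpa using this
    have d0 : Differentiable ℝ (fun x => ζ (x, 0, 0)) :=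
      (cx ζ hζ 0 0).differentiable (by norm_num)
    have d1 : Differentiable ℝ (fun x => ζ (x, 0, 1)) :=
      (cx ζ hζ 0 1).differentiable (by norm_num)
    have hB : Differentiable ℝ (fun x => ζ (x, 0, 1) - ζ (x, 0, 0)) := d1.sub d0
    have dx : ∀ x u, dX ζ (x, 0, u) = deriv (fun x => ζ (x, 0, 0)) x
        + deriv (fun x => ζ (x, 0, 1) - ζ (x, 0, 0)) x * u := fun x u => by
      have e1 : (fun x => ζ (x, 0, u)) =
          fun x => ζ (x, 0, 0) + (ζ (x, 0, 1) - ζ (x, 0, 0)) * u := funext fun x => au x 0 u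
      have h : HasDerivAt (fun x => ζ (x, 0, 0) + (ζ (x, 0, 1) - ζ (x, 0, 0)) * u)
          (deriv (fun x => ζ (x, 0, 0)) x
            + deriv (fun x => ζ (x, 0, 1) - ζ (x, 0, 0)) x * u) x :=
        (d0 x).hasDerivAt.add ((hB x).hasDerivAt.mul_const u)
      simp only [dX]
      rw [e1, h.deriv]
    have xu : ∀ x, ζ (x, 0, 1) - ζ (x, 0, 0) = ζ (0, 0, 1) - ζ (0, 0, 0) + m * x := fun x =>
      tds_const _ hB m (fun x => by
        have h := h15 (x, 0, 0)
        rw [ηuy] at h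
        have h' := tds_deriv (fun u => dX ζ (x, 0, u)) (deriv (fun x => ζ (x, 0, 0)) x)
          (deriv (fun x => ζ (x, 0, 1) - ζ (x, 0, 0)) x) 0 (fun u => by rw [dx]; ring) 0
        simp only [dU] at h
        rw [← h] at h'
        linarith) x
    have xx := tds_quad _ (cx ζ hζ 0 0) c (fun x => by
      have := h16 (x, 0, 0); rw [φxu] at this; exact this.symm)
    refine ⟨ζ (0,1,0) - ζ (0,0,0), ζ (0,0,1) - ζ (0,0,0), deriv (fun x => ζ (x, 0, 0)) 0,
      ζ (0,0,0), fun x y u => ?_⟩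
    have e1 := xx x
    rw [ay x y u, yx x u, yu u, au x 0 u, xu x, e1]
    ring
  obtain ⟨a, v, n, l, zeta⟩ := zeta
  have ζx : ∀ x y u, dX ζ (x, y, u) = n + m * u + 2 * c * x := fun x y u => by
    have := tds_deriv (fun x => ζ (x, y, u)) (l + a * y + v * u) (n + m * u) c
      (fun x => by rw [zeta]; ring) x
    simpa [dX] using this
  have ζy : ∀ x y u, dY ζ (x, y, u) = a := fun x y u => by
    have := tds_deriv (fun y => ζ (x, y, u)) (l + n * x + v * u + m * x * u + c * x ^ 2) a 0
      (fun y => by rw [zeta]; ring) y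
    simpa [dY] using this
  have ζu : ∀ x y u, dU ζ (x, y, u) = v + m * x := fun x y u => by
    have := tds_deriv (fun u => ζ (x, y, u)) (l + n * x + a * y + c * x ^ 2) (v + m * x) 0
      (fun u => by rw [zeta]; ring) u
    simpa [dU] using this
  have k17 : ∀ x y u : ℝ, 2 * w + 2 * c * x * u + 2 * m * u ^ 2 + (t + n + e) * u = 0 :=
    fun x y u => by
      have := h17 (x, y, u)
      simp only [phi, φx, φy, φu, ζx, ηy] at this
      linear_combination this
  have hw : w = 0 := by have := k17 0 0 0; linarith
  have hm : m = 0 := by have h := k17 0 0 1; have h' := k17 0 0 (-1); linarith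
  have ht : t = -(n + e) := by have h := k17 0 0 1; have h' := k17 0 0 (-1); linarith
  have hc : c = 0 := by have h := k17 1 0 1; have h' := k17 0 0 1; linarith
  have hl : l = 0 := by
    have := h18 (0, 0, 0)
    simp only [zeta] at this
    linarith
  have hd : d = 0 := by
    have := h19 (0, 0, 0)
    simp only [eta] at this
    linarith
  refine ⟨n, e, a, v, b, k, s, q, fun x y u => ⟨?_, ?_, ?_⟩⟩
  · rw [zeta, hl, hm, hc]; ring
  · rw [eta, hd, hm, hc]; ring
  · rw [phi, hw, hm, hc, ht]; ring
end

section
/- Let α ∈ ℝ and define L : ℝ⁸ → ℝ on the set where x·p + y·q − u ≠ 0 by L(x,y,u,p,q,r,s,t) = u·(s² − r·t)/(x·p + y·q − u)⁴ − α·u. Let D ⊆ ℝ² be open and let u : ℝ² → ℝ be C⁴ on D with x·u_x + y·u_y − u ≠ 0 throughout D. Write j²u(x,y) = (x, y, u(x,y), u_x(x,y), u_y(x,y), u_xx(x,y), u_xy(x,y), u_yy(x,y)). Then at every point of D one has L_u(j²u) − ∂/∂x[L_p(j²u)] − ∂/∂y[L_q(j²u)] + ∂²/∂x²[L_r(j²u)]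 + ∂²/∂x∂y[L_s(j²u)] + ∂²/∂y²[L_t(j²u)] = (u_xx·u_yy − u_xy²)/(x·u_x + y·u_y − u)⁴ − α. -/
/-- Partial derivative of a function on the jet space `ℝ⁸` (coordinates
`(x, y, u, p, q, r, s, t)` indexed by `0, …, 7`) with respect to the `i`-th variable. -/
noncomputable def jd (i : Fin 8) (L : (Fin 8 → ℝ) → ℝ) (v : Fin 8 → ℝ) : ℝ :=
  deriv (fun a => L (Function.update v i a)) (v i)

/-- The Țițeica Lagrangian `L(x,y,u,p,q,r,s,t) = u·(s² − r·t)/(x·p + y·q − u)⁴ − α·u`,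
with jet coordinates `x = v 0`, `y = v 1`, `u = v 2`, `p = v 3`, `q = v 4`,
`r = v 5`, `s = v 6`, `t = v 7`. -/
noncomputable def titeicaLagrangian (α : ℝ) (v : Fin 8 → ℝ) : ℝ :=
  v 2 * ((v 6) ^ 2 - v 5 * v 7) / (v 0 * v 3 + v 1 * v 4 - v 2) ^ 4 - α * v 2

/-- The second-order jet `j²u(x,y) = (x, y, u, u_x, u_y, u_xx, u_xy, u_yy)` of `u`. -/
noncomputable def jet2 (u : ℝ × ℝ → ℝ) (p : ℝ × ℝ) : Fin 8 → ℝ :=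
  ![p.1, p.2, u p, pdx u p, pdy u p, pdx (pdx u) p, pdy (pdx u) p, pdy (pdy u) p]

/-- `G` has partial derivatives `Gx`, `Gy` at each point of `D`. -/
def HP (D : Set (ℝ × ℝ)) (G Gx Gy : ℝ × ℝ → ℝ) : Prop :=
  ∀ q ∈ D, HasDerivAt (fun a => G (a, q.2)) (Gx q) q.1 ∧
    HasDerivAt (fun b => G (q.1, b)) (Gy q) q.2

lemma HP.mul {D : Set (ℝ × ℝ)} {f fx fy g gx gy : ℝ × ℝ → ℝ} (hf : HP D f fx fy)
    (hg : HP D g gx gy) : HP D (fun q => f q * g q)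
      (fun q => fx q * g q + f q * gx q) (fun q => fy q * g q + f q * gy q) := fun q hq =>
  ⟨(hf q hq).1.mul (hg q hq).1, (hf q hq).2.mul (hg q hq).2⟩

lemma HP.add {D : Set (ℝ × ℝ)} {f fx fy g gx gy : ℝ × ℝ → ℝ} (hf : HP D f fx fy)
    (hg : HP D g gx gy) : HP D (fun q => f q + g q)
      (fun q => fx q + gx q) (fun q => fy q + gy q) := fun q hq =>
  ⟨(hf q hq).1.add (hg q hq).1, (hf q hq).2.add (hg q hq).2⟩

lemma HP.sub {D : Set (ℝ × ℝ)} {f fx fy g gx gy : ℝ × ℝ → ℝ} (hf : HP D f fx fy)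
    (hg : HP D g gx gy) : HP D (fun q => f q - g q)
      (fun q => fx q - gx q) (fun q => fy q - gy q) := fun q hq =>
  ⟨(hf q hq).1.sub (hg q hq).1, (hf q hq).2.sub (hg q hq).2⟩

lemma HP.smul {D : Set (ℝ × ℝ)} {f fx fy : ℝ × ℝ → ℝ} (c : ℝ) (hf : HP D f fx fy) :
    HP D (fun q => c * f q) (fun q => c * fx q) (fun q => c * fy q) := fun q hq =>
  ⟨(hf q hq).1.const_mul c, (hf q hq).2.const_mul c⟩

lemma HP.inv {D : Set (ℝ × ℝ)} {f fx fy : ℝ × ℝ → ℝ} (hf : HP D f fx fy)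
    (h0 : ∀ q ∈ D, f q ≠ 0) :
    HP D (fun q => (f q)⁻¹) (fun q => -(fx q) / f q ^ 2) (fun q => -(fy q) / f q ^ 2) :=
  fun q hq => ⟨(hf q hq).1.fun_inv (h0 q hq), (hf q hq).2.fun_inv (h0 q hq)⟩

lemma HP.pow {D : Set (ℝ × ℝ)} {f fx fy : ℝ × ℝ → ℝ} (hf : HP D f fx fy) (n : ℕ) :
    HP D (fun q => f q ^ n) (fun q => n * f q ^ (n - 1) * fx q)
      (fun q => n * f q ^ (n - 1) * fy q) :=
  fun q hq => ⟨(hf q hq).1.fun_pow n, (hf q hq).2.fun_pow n⟩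

lemma HP.fst (D : Set (ℝ × ℝ)) : HP D (fun q => q.1) (fun _ => 1) (fun _ => 0) :=
  fun q _ => ⟨hasDerivAt_id _, hasDerivAt_const _ _⟩

lemma HP.snd (D : Set (ℝ × ℝ)) : HP D (fun q => q.2) (fun _ => 0) (fun _ => 1) :=
  fun q _ => ⟨hasDerivAt_const _ _, hasDerivAt_id _⟩

lemma nhds_fst {D : Set (ℝ × ℝ)} (hD : IsOpen D) {q : ℝ × ℝ} (hq : q ∈ D) :
    ∀ᶠ a in nhds q.1, (a, q.2) ∈ D :=
  (Continuous.prodMk continuous_id continuous_const).continuousAt.eventually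
    (hD.mem_nhds (by simpa using hq))

lemma nhds_snd {D : Set (ℝ × ℝ)} (hD : IsOpen D) {q : ℝ × ℝ} (hq : q ∈ D) :
    ∀ᶠ a in nhds q.2, (q.1, a) ∈ D :=
  (Continuous.prodMk continuous_const continuous_id).continuousAt.eventually
    (hD.mem_nhds (by simpa using hq))

lemma HP.congr {D : Set (ℝ × ℝ)} (hD : IsOpen D) {f fx fy g gx gy : ℝ × ℝ → ℝ}
    (hf : HP D f fx fy) (h : ∀ q ∈ D, g q = f q) (hx : ∀ q ∈ D, gx q = fx q)
    (hy : ∀ q ∈ D, gy q = fy q) : HP D g gx gy := by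
  intro q hq
  refine ⟨?_, ?_⟩
  · rw [hx q hq]
    exact (hf q hq).1.congr_of_eventuallyEq ((nhds_fst hD hq).mono fun a ha => h _ ha)
  · rw [hy q hq]
    exact (hf q hq).2.congr_of_eventuallyEq ((nhds_snd hD hq).mono fun a ha => h _ ha)

lemma HP.eqx {D : Set (ℝ × ℝ)} {f fx fy : ℝ × ℝ → ℝ} (hf : HP D f fx fy) :
    ∀ q ∈ D, pdx f q = fx q := fun q hq => (hf q hq).1.deriv

lemma HP.eqy {D : Set (ℝ × ℝ)} {f fx fy : ℝ × ℝ → ℝ} (hf : HP D f fx fy) :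
    ∀ q ∈ D, pdy f q = fy q := fun q hq => (hf q hq).2.deriv

lemma HP.of_fderiv {D : Set (ℝ × ℝ)} {f : ℝ × ℝ → ℝ}
    (hf : ∀ q ∈ D, DifferentiableAt ℝ f q) :
    HP D f (fun q => fderiv ℝ f q (1, 0)) (fun q => fderiv ℝ f q (0, 1)) := by
  intro q hq
  have h := (hf q hq).hasFDerivAt
  exact ⟨h.comp_hasDerivAt (f := fun a => (a, q.2)) q.1
      ((hasDerivAt_id q.1).prodMk (hasDerivAt_const q.1 q.2)),
    h.comp_hasDerivAt (f := fun a => (q.1, a)) q.2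
      ((hasDerivAt_const q.2 q.1).prodMk (hasDerivAt_id q.2))⟩

lemma base {D : Set (ℝ × ℝ)} (hD : IsOpen D) {f : ℝ × ℝ → ℝ} {n : ℕ}
    (hf : ContDiffOn ℝ (n + 1) f D) :
    HP D f (pdx f) (pdy f) ∧ ContDiffOn ℝ n (pdx f) D ∧ ContDiffOn ℝ n (pdy f) D := by
  have hd : ∀ q ∈ D, DifferentiableAt ℝ f q := fun q hq =>
    (hf.differentiableOn (by simp)).differentiableAt (hD.mem_nhds hq)
  have h := HP.of_fderiv hd
  have hc : ContDiffOn ℝ n (fderiv ℝ f) D := hf.fderiv_of_isOpen hD le_rfl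
  refine ⟨h.congr hD (fun _ _ => rfl) h.eqx h.eqy, ?_, ?_⟩
  · exact (hc.clm_apply contDiffOn_const).congr h.eqx
  · exact (hc.clm_apply contDiffOn_const).congr h.eqy

lemma pd_comm {D : Set (ℝ × ℝ)} (hD : IsOpen D) {f : ℝ × ℝ → ℝ}
    (hf : ContDiffOn ℝ 2 f D) : ∀ q ∈ D, pdx (pdy f) q = pdy (pdx f) q := by
  intro q hq
  have hd : ∀ q ∈ D, DifferentiableAt ℝ f q := fun q hq =>
    (hf.differentiableOn (by simp)).differentiableAt (hD.mem_nhds hq)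
  have h := HP.of_fderiv hd
  have hc : ContDiffOn ℝ 1 (fderiv ℝ f) D :=
    hf.fderiv_of_isOpen hD (by norm_num)
  have hd2 : ∀ q ∈ D, DifferentiableAt ℝ (fderiv ℝ f) q := fun q hq =>
    (hc.differentiableOn (by simp)).differentiableAt (hD.mem_nhds hq)
  have e : ∀ v : ℝ × ℝ, HP D (fun q => fderiv ℝ f q v)
      (fun q => fderiv ℝ (fderiv ℝ f) q (1, 0) v)
      (fun q => fderiv ℝ (fderiv ℝ f) q (0, 1) v) := by
    intro v
    refine (HP.of_fderiv (f := fun q => fderiv ℝ f q v)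
      fun q hq => (hd2 q hq).clm_apply (differentiableAt_const v)).congr hD
        (fun _ _ => rfl) ?_ ?_ <;>
    · intro q hq
      have := ((hd2 q hq).hasFDerivAt.clm_apply (hasFDerivAt_const v q)).fderiv
      simp [this]
  have e1 := ((e (0, 1)).congr hD h.eqy (fun _ _ => rfl) (fun _ _ => rfl)).eqx q hq
  have e2 := ((e (1, 0)).congr hD h.eqx (fun _ _ => rfl) (fun _ _ => rfl)).eqy q hq
  rw [e1, e2]
  have hs : IsSymmSndFDerivAt ℝ f q :=
    (hf.contDiffAt (hD.mem_nhds hq)).isSymmSndFDerivAt (by simp)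
  exact hs _ _

section jets
variable (α x y u p q r s t : ℝ)

lemma jd5 : jd 5 (titeicaLagrangian α) ![x, y, u, p, q, r, s, t]
    = (-1) * (u * t * ((x * p + y * q - u)⁻¹) ^ 4) := by
  have h : (fun a => titeicaLagrangian α (Function.update ![x, y, u, p, q, r, s, t] 5 a))
      = fun a => u * (s ^ 2 - a * t) / (x * p + y * q - u) ^ 4 - α * u := by
    funext a; simp [titeicaLagrangian, Function.update]
  unfold jd
  rw [h]
  refine (((((hasDerivAt_id _).mul_const t).const_sub (s ^ 2)).const_mul u).div_const _
    |>.sub_const _).deriv.trans ?_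
  rw [inv_pow]; ring

lemma jd7 : jd 7 (titeicaLagrangian α) ![x, y, u, p, q, r, s, t]
    = (-1) * (u * r * ((x * p + y * q - u)⁻¹) ^ 4) := by
  have h : (fun a => titeicaLagrangian α (Function.update ![x, y, u, p, q, r, s, t] 7 a))
      = fun a => u * (s ^ 2 - r * a) / (x * p + y * q - u) ^ 4 - α * u := by
    funext a; simp [titeicaLagrangian, Function.update]
  unfold jd
  rw [h]
  refine (((((hasDerivAt_id _).const_mul r).const_sub (s ^ 2)).const_mul u).div_const _
    |>.sub_const _).deriv.trans ?_
  rw [inv_pow]; ring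

lemma jd6 : jd 6 (titeicaLagrangian α) ![x, y, u, p, q, r, s, t]
    = 2 * (u * s * ((x * p + y * q - u)⁻¹) ^ 4) := by
  have h : (fun a => titeicaLagrangian α (Function.update ![x, y, u, p, q, r, s, t] 6 a))
      = fun a => u * (a ^ 2 - r * t) / (x * p + y * q - u) ^ 4 - α * u := by
    funext a; simp [titeicaLagrangian, Function.update]
  unfold jd
  rw [h]
  refine (((((hasDerivAt_id _).fun_pow 2).sub_const (r * t)).const_mul u).div_const _
    |>.sub_const _).deriv.trans ?_
  rw [inv_pow]
  simp
  ring

lemma jd3 (hw : x * p + y * q - u ≠ 0) :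
    jd 3 (titeicaLagrangian α) ![x, y, u, p, q, r, s, t]
    = (-4) * (u * (s ^ 2 - r * t) * (x * ((x * p + y * q - u)⁻¹) ^ 5)) := by
  have h : (fun a => titeicaLagrangian α (Function.update ![x, y, u, p, q, r, s, t] 3 a))
      = fun a => u * (s ^ 2 - r * t) / (x * a + y * q - u) ^ 4 - α * u := by
    funext a; simp [titeicaLagrangian, Function.update]
  unfold jd
  rw [h]
  refine ((((hasDerivAt_const _ (u * (s ^ 2 - r * t))).fun_div
    (((((hasDerivAt_id' _).const_mul x).add_const (y * q)).sub_const u).fun_pow 4)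
    (pow_ne_zero 4 hw)).sub_const _).deriv).trans ?_
  push_cast
  generalize x * p + y * q - u = w at *
  field_simp
  try simp only [Nat.add_one_sub_one, Nat.reduceSub]
  ring

lemma jd4 (hw : x * p + y * q - u ≠ 0) :
    jd 4 (titeicaLagrangian α) ![x, y, u, p, q, r, s, t]
    = (-4) * (u * (s ^ 2 - r * t) * (y * ((x * p + y * q - u)⁻¹) ^ 5)) := by
  have h : (fun a => titeicaLagrangian α (Function.update ![x, y, u, p, q, r, s, t] 4 a))
      = fun a => u * (s ^ 2 - r * t) / (x * p + y * a - u) ^ 4 - α * u := by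
    funext a; simp [titeicaLagrangian, Function.update]
  unfold jd
  rw [h]
  refine ((((hasDerivAt_const _ (u * (s ^ 2 - r * t))).fun_div
    (((((hasDerivAt_id' _).const_mul y).const_add (x * p)).sub_const u).fun_pow 4)
    (pow_ne_zero 4 hw)).sub_const _).deriv).trans ?_
  push_cast
  generalize x * p + y * q - u = w at *
  field_simp
  try simp only [Nat.add_one_sub_one, Nat.reduceSub]
  ring

lemma jd2 (hw : x * p + y * q - u ≠ 0) :
    jd 2 (titeicaLagrangian α) ![x, y, u, p, q, r, s, t]
    = (s ^ 2 - r * t) * ((x * p + y * q - u)⁻¹) ^ 4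
      + 4 * u * (s ^ 2 - r * t) * ((x * p + y * q - u)⁻¹) ^ 5 - α := by
  have h : (fun a => titeicaLagrangian α (Function.update ![x, y, u, p, q, r, s, t] 2 a))
      = fun a => a * (s ^ 2 - r * t) / (x * p + y * q - a) ^ 4 - α * a := by
    funext a; simp [titeicaLagrangian, Function.update]
  unfold jd
  rw [h]
  refine (((((hasDerivAt_id' _).mul_const (s ^ 2 - r * t)).fun_div
    (((hasDerivAt_id' _).const_sub (x * p + y * q)).fun_pow 4)
    (pow_ne_zero 4 hw)).fun_sub ((hasDerivAt_id' _).const_mul α)).deriv).trans ?_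
  push_cast
  generalize x * p + y * q - u = w at *
  field_simp
  try simp only [Nat.add_one_sub_one, Nat.reduceSub]
  ring
end jets

/-- Theorem 6 of the paper: the second-order Euler–Lagrange expression of the Țițeica
Lagrangian `L = u·(u_xy² − u_xx·u_yy)/(x·u_x + y·u_y − u)⁴ − α·u`, evaluated along any
C⁴ function `u` with `x·u_x + y·u_y − u ≠ 0`, equals
`(u_xx·u_yy − u_xy²)/(x·u_x + y·u_y − u)⁴ − α`. -/
theorem titeica_euler_lagrange (α : ℝ) (D : Set (ℝ × ℝ)) (hD : IsOpen D)
    (u : ℝ × ℝ → ℝ) (hu : ContDiffOn ℝ 4 u D)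
    (hw : ∀ p ∈ D, p.1 * pdx u p + p.2 * pdy u p - u p ≠ 0) :
    ∀ p ∈ D,
      jd 2 (titeicaLagrangian α) (jet2 u p)
        - pdx (fun q => jd 3 (titeicaLagrangian α) (jet2 u q)) p
        - pdy (fun q => jd 4 (titeicaLagrangian α) (jet2 u q)) p
        + pdx (pdx (fun q => jd 5 (titeicaLagrangian α) (jet2 u q))) p
        + pdx (pdy (fun q => jd 6 (titeicaLagrangian α) (jet2 u q))) p
        + pdy (pdy (fun q => jd 7 (titeicaLagrangian α) (jet2 u q))) p
      = (pdx (pdx u) p * pdy (pdy u) p - (pdy (pdx u) p) ^ 2)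
          / (p.1 * pdx u p + p.2 * pdy u p - u p) ^ 4 - α := by
  intro p hp
  obtain ⟨Hu, cp, cq⟩ := base hD (n := 3) (hu.of_le (by norm_num))
  obtain ⟨Hp, cr, cs⟩ := base hD (n := 2) (cp.of_le (by norm_num))
  obtain ⟨Hq, -, ct⟩ := base hD (n := 2) (cq.of_le (by norm_num))
  obtain ⟨Hr, ca, cb⟩ := base hD (n := 1) (cr.of_le (by norm_num))
  obtain ⟨Hs, cb', cc⟩ := base hD (n := 1) (cs.of_le (by norm_num))
  obtain ⟨Ht, cc', cd⟩ := base hD (n := 1) (ct.of_le (by norm_num))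
  have qx := pd_comm hD (hu.of_le (by norm_num))
  have rs := pd_comm hD (cp.of_le (by norm_num))
  have ts := pd_comm hD (cq.of_le (by norm_num))
  have ss := pd_comm hD (cs.of_le (by norm_num))
  obtain ⟨Hb, -, -⟩ := base hD (n := 0) (cb'.of_le (by norm_num))
  obtain ⟨Hc, -, -⟩ := base hD (n := 0) (cc.of_le (by norm_num))
  obtain ⟨Ha, -, -⟩ := base hD (n := 0) (ca.of_le (by norm_num))
  obtain ⟨Hd, -, -⟩ := base hD (n := 0) (cd.of_le (by norm_num))
  have ryb : ∀ q ∈ D, pdy (pdx (pdx u)) q = pdx (pdy (pdx u)) q := fun q hq => (rs q hq).symm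
  have sq : ∀ q ∈ D, pdx (pdx (pdy u)) q = pdx (pdy (pdx u)) q :=
    (Hs.congr hD qx (fun _ _ => rfl) (fun _ _ => rfl)).eqx
  have sqy : ∀ q ∈ D, pdy (pdx (pdy u)) q = pdy (pdy (pdx u)) q :=
    (Hs.congr hD qx (fun _ _ => rfl) (fun _ _ => rfl)).eqy
  have txc : ∀ q ∈ D, pdx (pdy (pdy u)) q = pdy (pdy (pdx u)) q := fun q hq =>
    (ts q hq).trans (sqy q hq)
  have Hq := Hq.congr hD (fun _ _ => rfl) (fun q hq => (qx q hq).symm) (fun _ _ => rfl)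
  have Hr := Hr.congr hD (fun _ _ => rfl) (fun _ _ => rfl) (fun q hq => rs q hq)
  have Ht := Ht.congr hD (fun _ _ => rfl) (fun q hq => (txc q hq).symm) (fun _ _ => rfl)
  have Hb := Hb.congr hD (fun _ _ => rfl) (fun _ _ => rfl) (fun q hq => ss q hq)
  clear cp cq cr cs ct ca cb cb' cc cc' cd hu
  have e2 := jd2 α p.1 p.2 (u p) (pdx u p) (pdy u p) (pdx (pdx u) p) (pdy (pdx u) p)
    (pdy (pdy u) p) (hw p hp)
  have e3 := fun q hq => jd3 α q.1 q.2 (u q) (pdx u q) (pdy u q) (pdx (pdx u) q)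
    (pdy (pdx u) q) (pdy (pdy u) q) (hw q hq)
  have e4 := fun q hq => jd4 α q.1 q.2 (u q) (pdx u q) (pdy u q) (pdx (pdx u) q)
    (pdy (pdx u) q) (pdy (pdy u) q) (hw q hq)
  have e5 := fun q : ℝ × ℝ => jd5 α q.1 q.2 (u q) (pdx u q) (pdy u q) (pdx (pdx u) q)
    (pdy (pdx u) q) (pdy (pdy u) q)
  have e6 := fun q : ℝ × ℝ => jd6 α q.1 q.2 (u q) (pdx u q) (pdy u q) (pdx (pdx u) q)
    (pdy (pdx u) q) (pdy (pdy u) q)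
  have e7 := fun q : ℝ × ℝ => jd7 α q.1 q.2 (u q) (pdx u q) (pdy u q) (pdx (pdx u) q)
    (pdy (pdx u) q) (pdy (pdy u) q)
  unfold jet2
  rw [e2]
  clear e2 ryb sq sqy txc qx rs ts ss
  generalize pdx (pdx (pdx u)) = A at *
  generalize pdx (pdy (pdx u)) = B at *
  generalize pdy (pdy (pdx u)) = C at *
  generalize pdy (pdy (pdy u)) = E at *
  generalize pdx (pdx u) = R at *
  generalize pdy (pdx u) = S at *
  generalize pdy (pdy u) = T at *
  generalize pdx u = P at *
  generalize pdy u = Q at *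
  have HW : HP D (fun q => q.1 * P q + q.2 * Q q - u q) (fun q => q.1 * R q + q.2 * S q)
      (fun q => q.1 * S q + q.2 * T q) :=
    ((((HP.fst D).mul Hp).add ((HP.snd D).mul Hq)).sub Hu).congr hD (fun _ _ => rfl)
      (fun q _ => by ring) (fun q _ => by ring)
  have HI := (HW.inv hw).congr hD (fun _ _ => rfl)
    (gx := fun q => (-1) * ((q.1 * R q + q.2 * S q) * ((q.1 * P q + q.2 * Q q - u q)⁻¹) ^ 2))
    (gy := fun q => (-1) * ((q.1 * S q + q.2 * T q) * ((q.1 * P q + q.2 * Q q - u q)⁻¹) ^ 2))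
    (fun q _ => by rw [inv_pow]; ring) (fun q _ => by rw [inv_pow]; ring)
  have hIW : (p.1 * P p + p.2 * Q p - u p)⁻¹ * (p.1 * P p + p.2 * Q p - u p) = 1 :=
    inv_mul_cancel₀ (hw p hp)
  rw [div_eq_mul_inv, ← inv_pow]
  generalize hI : (fun q : ℝ × ℝ => (q.1 * P q + q.2 * Q q - u q)⁻¹) = I at HI
  have hI' : ∀ q : ℝ × ℝ, (q.1 * P q + q.2 * Q q - u q)⁻¹ = I q := fun q => congrFun hI q
  simp only [hI'] at HI e3 e4 e5 e6 e7 hIW ⊢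
  have HWx := ((HP.fst D).mul Hr).add ((HP.snd D).mul Hs)
  have HWy := ((HP.fst D).mul Hs).add ((HP.snd D).mul Ht)
  have HDl := (Hs.pow 2).sub (Hr.mul Ht)
  have G3 := (((Hu.mul HDl).mul ((HP.fst D).mul (HI.pow 5))).smul (-4)).congr hD e3
    (fun _ _ => rfl) (fun _ _ => rfl)
  have G4 := (((Hu.mul HDl).mul ((HP.snd D).mul (HI.pow 5))).smul (-4)).congr hD e4
    (fun _ _ => rfl) (fun _ _ => rfl)
  have G5 := (((Hu.mul Ht).mul (HI.pow 4)).smul (-1)).congr hD (fun q _ => e5 q)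
    (fun _ _ => rfl) (fun _ _ => rfl)
  have G6 := (((Hu.mul Hs).mul (HI.pow 4)).smul 2).congr hD (fun q _ => e6 q)
    (fun _ _ => rfl) (fun _ _ => rfl)
  have G7 := (((Hu.mul Hr).mul (HI.pow 4)).smul (-1)).congr hD (fun q _ => e7 q)
    (fun _ _ => rfl) (fun _ _ => rfl)
  have K5 := ((((((Hp.mul Ht).add (Hu.mul Hc)).mul (HI.pow 4)).add
    ((Hu.mul Ht).mul (((HI.pow 3).smul 4).mul
      ((HWx.mul (HI.pow 2)).smul (-1))))).smul (-1)).congr hD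
      (fun q hq => (G5.eqx q hq).trans (by norm_num)) (fun _ _ => rfl) (fun _ _ => rfl)).eqx p hp
  have K6 := ((((((Hq.mul Hs).add (Hu.mul Hc)).mul (HI.pow 4)).add
    ((Hu.mul Hs).mul (((HI.pow 3).smul 4).mul
      ((HWy.mul (HI.pow 2)).smul (-1))))).smul 2).congr hD
      (fun q hq => (G6.eqy q hq).trans (by norm_num)) (fun _ _ => rfl) (fun _ _ => rfl)).eqx p hp
  have K7 := ((((((Hq.mul Hr).add (Hu.mul Hb)).mul (HI.pow 4)).add
    ((Hu.mul Hr).mul (((HI.pow 3).smul 4).mul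
      ((HWy.mul (HI.pow 2)).smul (-1))))).smul (-1)).congr hD
      (fun q hq => (G7.eqy q hq).trans (by norm_num)) (fun _ _ => rfl) (fun _ _ => rfl)).eqy p hp
  rw [K5, K6, K7, G3.eqx p hp, G4.eqy p hp]
  clear K5 K6 K7 G3 G4 G5 G6 G7
  push_cast
  linear_combination (4 * (R p * T p - S p ^ 2) * I p ^ 4) * hIW
end

section
/- Let α ∈ ℝ and define L : ℝ⁸ → ℝ on the open set where x·p + y·q − u ≠ 0 by L(x,y,u,p,q,r,s,t) = u·(s² − r·t)/(x·p + y·q − u)⁴ − α·u. Then at every point of this set: (i) x·L_x − u·L_u − 2p·L_p − q·L_q − 3r·L_r − 2s·L_s − t·L_t + L = 0, and (ii) y·L_y − u·L_u − p·L_p − 2q·L_q − r·L_r − 2s·L_s − 3t·L_t + L = 0, where subscripts denote partial derivatives of L with respect to the indicated variables. -/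
/-- Quotient rule in the form needed: derivative of `N / D ^ 4 - M`. -/
theorem deriv_quot_aux {N D M : ℝ → ℝ} {N' D' M' a : ℝ} (hN : HasDerivAt N N' a)
    (hD : HasDerivAt D D' a) (hM : HasDerivAt M M' a) (h : D a ≠ 0) :
    deriv (fun z => N z / D z ^ 4 - M z) a
      = (N' * D a - 4 * N a * D') / D a ^ 5 - M' := by
  have h1 := ((hN.div (hD.pow 4) (pow_ne_zero 4 h)).sub hM).deriv
  refine Eq.trans h1 ?_
  simp only [Pi.pow_apply]
  field_simp
  push_cast
  ring

/-- An affine function has its slope as derivative. -/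
theorem affine_aux (f : ℝ → ℝ) (m c a : ℝ) (h : ∀ z, f z = m * z + c) :
    HasDerivAt f m a := by
  have : f = fun z => m * z + c := funext h
  rw [this]
  simpa using ((hasDerivAt_id a).const_mul m).add_const c

/-- The infinitesimal variational symmetry identities `pr²Y(L) + L·Div ξ = 0` for the
Țițeica Lagrangian and the scaling fields `Y₁ = x ∂/∂x − u ∂/∂u`, `Y₂ = y ∂/∂y − u ∂/∂u`
(part of Theorem 10 of the paper): wherever `x·p + y·q − u ≠ 0`,
(i) `x·L_x − u·L_u − 2p·L_p − q·L_q − 3r·L_r − 2s·L_s − t·L_t + L = 0` and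
(ii) `y·L_y − u·L_u − p·L_p − 2q·L_q − r·L_r − 2s·L_s − 3t·L_t + L = 0`. -/
theorem titeica_variational_symmetry_scaling (α : ℝ) (v : Fin 8 → ℝ)
    (hv : v 0 * v 3 + v 1 * v 4 - v 2 ≠ 0) :
    (v 0 * jd 0 (titeicaLagrangian α) v - v 2 * jd 2 (titeicaLagrangian α) v
      - 2 * v 3 * jd 3 (titeicaLagrangian α) v - v 4 * jd 4 (titeicaLagrangian α) v
      - 3 * v 5 * jd 5 (titeicaLagrangian α) v - 2 * v 6 * jd 6 (titeicaLagrangian α) v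
      - v 7 * jd 7 (titeicaLagrangian α) v + titeicaLagrangian α v = 0) ∧
    (v 1 * jd 1 (titeicaLagrangian α) v - v 2 * jd 2 (titeicaLagrangian α) v
      - v 3 * jd 3 (titeicaLagrangian α) v - 2 * v 4 * jd 4 (titeicaLagrangian α) v
      - v 5 * jd 5 (titeicaLagrangian α) v - 2 * v 6 * jd 6 (titeicaLagrangian α) v
      - 3 * v 7 * jd 7 (titeicaLagrangian α) v + titeicaLagrangian α v = 0) := by
  have h0 : jd 0 (titeicaLagrangian α) v
      = (0 * (v 0 * v 3 + v 1 * v 4 - v 2) - 4 * (v 2 * ((v 6) ^ 2 - v 5 * v 7)) * (v 3)) / (v 0 * v 3 + v 1 * v 4 - v 2) ^ 5 - 0 := by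
    have hN : HasDerivAt (fun z : ℝ => v 2 * ((v 6) ^ 2 - v 5 * v 7)) 0 (v 0) := affine_aux _ _ (v 2 * ((v 6) ^ 2 - v 5 * v 7)) _ (fun z => by ring)
    have hD : HasDerivAt (fun z : ℝ => z * v 3 + v 1 * v 4 - v 2) (v 3) (v 0) :=
      affine_aux _ _ (0 * v 3 + v 1 * v 4 - v 2) _ (fun z => by ring)
    have hM : HasDerivAt (fun z : ℝ => α * v 2) 0 (v 0) :=
      affine_aux _ _ (α * v 2) _ (fun z => by ring)
    exact deriv_quot_aux hN hD hM hv
  have h1 : jd 1 (titeicaLagrangian α) v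
      = (0 * (v 0 * v 3 + v 1 * v 4 - v 2) - 4 * (v 2 * ((v 6) ^ 2 - v 5 * v 7)) * (v 4)) / (v 0 * v 3 + v 1 * v 4 - v 2) ^ 5 - 0 := by
    have hN : HasDerivAt (fun z : ℝ => v 2 * ((v 6) ^ 2 - v 5 * v 7)) 0 (v 1) := affine_aux _ _ (v 2 * ((v 6) ^ 2 - v 5 * v 7)) _ (fun z => by ring)
    have hD : HasDerivAt (fun z : ℝ => v 0 * v 3 + z * v 4 - v 2) (v 4) (v 1) :=
      affine_aux _ _ (v 0 * v 3 + 0 * v 4 - v 2) _ (fun z => by ring)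
    have hM : HasDerivAt (fun z : ℝ => α * v 2) 0 (v 1) :=
      affine_aux _ _ (α * v 2) _ (fun z => by ring)
    exact deriv_quot_aux hN hD hM hv
  have h2 : jd 2 (titeicaLagrangian α) v
      = (((v 6)^2 - v 5 * v 7) * (v 0 * v 3 + v 1 * v 4 - v 2) - 4 * (v 2 * ((v 6) ^ 2 - v 5 * v 7)) * (-1)) / (v 0 * v 3 + v 1 * v 4 - v 2) ^ 5 - α := by
    have hN : HasDerivAt (fun z : ℝ => z * ((v 6) ^ 2 - v 5 * v 7)) ((v 6)^2 - v 5 * v 7) (v 2) := affine_aux _ _ (0 * ((v 6) ^ 2 - v 5 * v 7)) _ (fun z => by ring)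
    have hD : HasDerivAt (fun z : ℝ => v 0 * v 3 + v 1 * v 4 - z) (-1) (v 2) :=
      affine_aux _ _ (v 0 * v 3 + v 1 * v 4 - 0) _ (fun z => by ring)
    have hM : HasDerivAt (fun z : ℝ => α * z) α (v 2) :=
      affine_aux _ _ (α * 0) _ (fun z => by ring)
    exact deriv_quot_aux hN hD hM hv
  have h3 : jd 3 (titeicaLagrangian α) v
      = (0 * (v 0 * v 3 + v 1 * v 4 - v 2) - 4 * (v 2 * ((v 6) ^ 2 - v 5 * v 7)) * (v 0)) / (v 0 * v 3 + v 1 * v 4 - v 2) ^ 5 - 0 := by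
    have hN : HasDerivAt (fun z : ℝ => v 2 * ((v 6) ^ 2 - v 5 * v 7)) 0 (v 3) := affine_aux _ _ (v 2 * ((v 6) ^ 2 - v 5 * v 7)) _ (fun z => by ring)
    have hD : HasDerivAt (fun z : ℝ => v 0 * z + v 1 * v 4 - v 2) (v 0) (v 3) :=
      affine_aux _ _ (v 0 * 0 + v 1 * v 4 - v 2) _ (fun z => by ring)
    have hM : HasDerivAt (fun z : ℝ => α * v 2) 0 (v 3) :=
      affine_aux _ _ (α * v 2) _ (fun z => by ring)
    exact deriv_quot_aux hN hD hM hv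
  have h4 : jd 4 (titeicaLagrangian α) v
      = (0 * (v 0 * v 3 + v 1 * v 4 - v 2) - 4 * (v 2 * ((v 6) ^ 2 - v 5 * v 7)) * (v 1)) / (v 0 * v 3 + v 1 * v 4 - v 2) ^ 5 - 0 := by
    have hN : HasDerivAt (fun z : ℝ => v 2 * ((v 6) ^ 2 - v 5 * v 7)) 0 (v 4) := affine_aux _ _ (v 2 * ((v 6) ^ 2 - v 5 * v 7)) _ (fun z => by ring)
    have hD : HasDerivAt (fun z : ℝ => v 0 * v 3 + v 1 * z - v 2) (v 1) (v 4) :=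
      affine_aux _ _ (v 0 * v 3 + v 1 * 0 - v 2) _ (fun z => by ring)
    have hM : HasDerivAt (fun z : ℝ => α * v 2) 0 (v 4) :=
      affine_aux _ _ (α * v 2) _ (fun z => by ring)
    exact deriv_quot_aux hN hD hM hv
  have h5 : jd 5 (titeicaLagrangian α) v
      = ((-(v 2 * v 7)) * (v 0 * v 3 + v 1 * v 4 - v 2) - 4 * (v 2 * ((v 6) ^ 2 - v 5 * v 7)) * 0) / (v 0 * v 3 + v 1 * v 4 - v 2) ^ 5 - 0 := by
    have hN : HasDerivAt (fun z : ℝ => v 2 * ((v 6) ^ 2 - z * v 7)) (-(v 2 * v 7)) (v 5) := affine_aux _ _ (v 2 * ((v 6) ^ 2 - 0 * v 7)) _ (fun z => by ring)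
    have hD : HasDerivAt (fun z : ℝ => v 0 * v 3 + v 1 * v 4 - v 2) 0 (v 5) :=
      affine_aux _ _ (v 0 * v 3 + v 1 * v 4 - v 2) _ (fun z => by ring)
    have hM : HasDerivAt (fun z : ℝ => α * v 2) 0 (v 5) :=
      affine_aux _ _ (α * v 2) _ (fun z => by ring)
    exact deriv_quot_aux hN hD hM hv
  have h6 : jd 6 (titeicaLagrangian α) v
      = ((2 * v 2 * v 6) * (v 0 * v 3 + v 1 * v 4 - v 2) - 4 * (v 2 * ((v 6) ^ 2 - v 5 * v 7)) * 0) / (v 0 * v 3 + v 1 * v 4 - v 2) ^ 5 - 0 := by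
    have hN : HasDerivAt (fun z : ℝ => v 2 * ((z) ^ 2 - v 5 * v 7)) (2 * v 2 * v 6) (v 6) := by
      have h := (((hasDerivAt_id' (v 6)).fun_pow 2).sub_const (v 5 * v 7)).const_mul (v 2)
      have e : v 2 * (((2 : ℕ) : ℝ) * v 6 ^ (2 - 1) * 1) = 2 * v 2 * v 6 := by
        norm_num
        ring
      rw [← e]
      exact h
    have hD : HasDerivAt (fun z : ℝ => v 0 * v 3 + v 1 * v 4 - v 2) 0 (v 6) :=
      affine_aux _ _ (v 0 * v 3 + v 1 * v 4 - v 2) _ (fun z => by ring)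
    have hM : HasDerivAt (fun z : ℝ => α * v 2) 0 (v 6) :=
      affine_aux _ _ (α * v 2) _ (fun z => by ring)
    exact deriv_quot_aux hN hD hM hv
  have h7 : jd 7 (titeicaLagrangian α) v
      = ((-(v 2 * v 5)) * (v 0 * v 3 + v 1 * v 4 - v 2) - 4 * (v 2 * ((v 6) ^ 2 - v 5 * v 7)) * 0) / (v 0 * v 3 + v 1 * v 4 - v 2) ^ 5 - 0 := by
    have hN : HasDerivAt (fun z : ℝ => v 2 * ((v 6) ^ 2 - v 5 * z)) (-(v 2 * v 5)) (v 7) := affine_aux _ _ (v 2 * ((v 6) ^ 2 - v 5 * 0)) _ (fun z => by ring)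
    have hD : HasDerivAt (fun z : ℝ => v 0 * v 3 + v 1 * v 4 - v 2) 0 (v 7) :=
      affine_aux _ _ (v 0 * v 3 + v 1 * v 4 - v 2) _ (fun z => by ring)
    have hM : HasDerivAt (fun z : ℝ => α * v 2) 0 (v 7) :=
      affine_aux _ _ (α * v 2) _ (fun z => by ring)
    exact deriv_quot_aux hN hD hM hv
  rw [h0, h1, h2, h3, h4, h5, h6, h7]
  unfold titeicaLagrangian
  constructor
  · field_simp
    ring
  · field_simp
    ring
end

section
/- Let α ∈ ℝ and define L : ℝ⁸ → ℝ on the open set where x·p + y·q − u ≠ 0 by L(x,y,u,p,q,r,s,t) = u·(s² − r·t)/(x·p + y·q − u)⁴ − α·u. Then at every point of this set: (i) y·L_x − p·L_q − r·L_s − 2s·L_t = 0, and (ii) x·L_y − q·L_p − 2s·L_r − t·L_s = 0, where subscripts denote partial derivatives of L with respect to the indicated variables. -/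
/-- Derivative of the Lagrangian along a line on which numerator and denominator are affine
or quadratic. -/
theorem titeica_aux (n n' w w' c x : ℝ) (N W F : ℝ → ℝ) (hN : HasDerivAt N n' x)
    (hW : HasDerivAt W w' x) (hn : N x = n) (hw : W x = w) (h0 : w ≠ 0)
    (hF : ∀ a, F a = N a / W a ^ 4 - c) :
    deriv F x = n' / w ^ 4 - 4 * n * w' / w ^ 5 := by
  subst hn hw
  have hFe : F = fun a => N a / W a ^ 4 - c := funext hF
  rw [hFe]
  have h := ((hN.fun_div (hW.fun_pow 4) (pow_ne_zero 4 h0)).sub_const c).deriv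
  rw [h]
  field_simp
  push_cast
  ring

theorem titeica_affine (a b x : ℝ) : HasDerivAt (fun z : ℝ => a * z + b) a x := by
  simpa using ((hasDerivAt_id x).const_mul a).add_const b

/-- The infinitesimal variational symmetry identities `pr²Y(L) + L·Div ξ = 0` for the
Țițeica Lagrangian and the shear fields `Y₃ = y ∂/∂x`, `Y₄ = x ∂/∂y`
(part of Theorem 10 of the paper): wherever `x·p + y·q − u ≠ 0`,
(i) `y·L_x − p·L_q − r·L_s − 2s·L_t = 0` and (ii) `x·L_y − q·L_p − 2s·L_r − t·L_s = 0`. -/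
theorem titeica_variational_symmetry_shear (α : ℝ) (v : Fin 8 → ℝ)
    (hv : v 0 * v 3 + v 1 * v 4 - v 2 ≠ 0) :
    (v 1 * jd 0 (titeicaLagrangian α) v - v 3 * jd 4 (titeicaLagrangian α) v
      - v 5 * jd 6 (titeicaLagrangian α) v - 2 * v 6 * jd 7 (titeicaLagrangian α) v = 0) ∧
    (v 0 * jd 1 (titeicaLagrangian α) v - v 4 * jd 3 (titeicaLagrangian α) v
      - 2 * v 6 * jd 5 (titeicaLagrangian α) v - v 7 * jd 6 (titeicaLagrangian α) v = 0) := by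
  have hq : HasDerivAt (fun z : ℝ => v 2 * (z ^ 2 - v 5 * v 7)) (v 2 * (2 * v 6)) (v 6) := by
    simpa using (((hasDerivAt_id (v 6)).fun_pow 2).sub_const (v 5 * v 7)).const_mul (v 2)
  have h0 : jd 0 (titeicaLagrangian α) v = (0) / (v 0 * v 3 + v 1 * v 4 - v 2) ^ 4
      - 4 * (v 2 * ((v 6) ^ 2 - v 5 * v 7)) * (v 3) / (v 0 * v 3 + v 1 * v 4 - v 2) ^ 5 := by
    refine titeica_aux _ _ _ _ (α * v 2) _ _ _ _ (titeica_affine (0) (v 2 * ((v 6) ^ 2 - v 5 * v 7)) _)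
      (titeica_affine (v 3) (v 1 * v 4 - v 2) _) (by ring) (by ring) hv ?_
    intro a
    simp [titeicaLagrangian, Function.update_apply]
    try ring_nf
  have h1 : jd 1 (titeicaLagrangian α) v = (0) / (v 0 * v 3 + v 1 * v 4 - v 2) ^ 4
      - 4 * (v 2 * ((v 6) ^ 2 - v 5 * v 7)) * (v 4) / (v 0 * v 3 + v 1 * v 4 - v 2) ^ 5 := by
    refine titeica_aux _ _ _ _ (α * v 2) _ _ _ _ (titeica_affine (0) (v 2 * ((v 6) ^ 2 - v 5 * v 7)) _)
      (titeica_affine (v 4) (v 0 * v 3 - v 2) _) (by ring) (by ring) hv ?_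
    intro a
    simp [titeicaLagrangian, Function.update_apply]
    try ring_nf
  have h3 : jd 3 (titeicaLagrangian α) v = (0) / (v 0 * v 3 + v 1 * v 4 - v 2) ^ 4
      - 4 * (v 2 * ((v 6) ^ 2 - v 5 * v 7)) * (v 0) / (v 0 * v 3 + v 1 * v 4 - v 2) ^ 5 := by
    refine titeica_aux _ _ _ _ (α * v 2) _ _ _ _ (titeica_affine (0) (v 2 * ((v 6) ^ 2 - v 5 * v 7)) _)
      (titeica_affine (v 0) (v 1 * v 4 - v 2) _) (by ring) (by ring) hv ?_
    intro a
    simp [titeicaLagrangian, Function.update_apply]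
    try ring_nf
  have h4 : jd 4 (titeicaLagrangian α) v = (0) / (v 0 * v 3 + v 1 * v 4 - v 2) ^ 4
      - 4 * (v 2 * ((v 6) ^ 2 - v 5 * v 7)) * (v 1) / (v 0 * v 3 + v 1 * v 4 - v 2) ^ 5 := by
    refine titeica_aux _ _ _ _ (α * v 2) _ _ _ _ (titeica_affine (0) (v 2 * ((v 6) ^ 2 - v 5 * v 7)) _)
      (titeica_affine (v 1) (v 0 * v 3 - v 2) _) (by ring) (by ring) hv ?_
    intro a
    simp [titeicaLagrangian, Function.update_apply]
    try ring_nf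
  have h5 : jd 5 (titeicaLagrangian α) v = (-(v 2 * v 7)) / (v 0 * v 3 + v 1 * v 4 - v 2) ^ 4
      - 4 * (v 2 * ((v 6) ^ 2 - v 5 * v 7)) * (0) / (v 0 * v 3 + v 1 * v 4 - v 2) ^ 5 := by
    refine titeica_aux _ _ _ _ (α * v 2) _ _ _ _ (titeica_affine (-(v 2 * v 7)) (v 2 * v 6 ^ 2) _)
      (titeica_affine (0) (v 0 * v 3 + v 1 * v 4 - v 2) _) (by ring) (by ring) hv ?_
    intro a
    simp [titeicaLagrangian, Function.update_apply]
    try ring_nf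
  have h7 : jd 7 (titeicaLagrangian α) v = (-(v 2 * v 5)) / (v 0 * v 3 + v 1 * v 4 - v 2) ^ 4
      - 4 * (v 2 * ((v 6) ^ 2 - v 5 * v 7)) * (0) / (v 0 * v 3 + v 1 * v 4 - v 2) ^ 5 := by
    refine titeica_aux _ _ _ _ (α * v 2) _ _ _ _ (titeica_affine (-(v 2 * v 5)) (v 2 * v 6 ^ 2) _)
      (titeica_affine (0) (v 0 * v 3 + v 1 * v 4 - v 2) _) (by ring) (by ring) hv ?_
    intro a
    simp [titeicaLagrangian, Function.update_apply]
    try ring_nf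
  have h6 : jd 6 (titeicaLagrangian α) v = (v 2 * (2 * v 6)) / (v 0 * v 3 + v 1 * v 4 - v 2) ^ 4
      - 4 * (v 2 * ((v 6) ^ 2 - v 5 * v 7)) * (0) / (v 0 * v 3 + v 1 * v 4 - v 2) ^ 5 := by
    refine titeica_aux _ _ _ _ (α * v 2) _ _ _ _ hq
      (titeica_affine (0) (v 0 * v 3 + v 1 * v 4 - v 2) _) (by ring) (by ring) hv ?_
    intro a
    simp [titeicaLagrangian, Function.update_apply]
    try ring_nf
  rw [h0, h1, h3, h4, h5, h6, h7]
  constructor <;> ring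
end

section
/- Let a ∈ ℝ, a ≠ 0. The function u(x,y) = √(1 + a·x·y), defined on the open set D = {(x,y) ∈ ℝ² : 1 + a·x·y > 0}, satisfies the Țițeica PDE with parameter α = −a²/4 at every point of D. -/
lemma pdx_sqrt_xy (a : ℝ) (p : ℝ × ℝ) (hp : 1 + a * (p.1 * p.2) > 0) :
    pdx (fun q : ℝ × ℝ => Real.sqrt (1 + a * (q.1 * q.2))) p
      = a * p.2 / (2 * Real.sqrt (1 + a * (p.1 * p.2))) := by
  have h : HasDerivAt (fun x : ℝ => 1 + a * (x * p.2)) (a * (1 * p.2)) p.1 :=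
    (((hasDerivAt_id p.1).mul_const p.2).const_mul a).const_add 1
  have := (h.sqrt hp.ne').deriv
  simpa [pdx] using this

lemma pdy_sqrt_xy (a : ℝ) (p : ℝ × ℝ) (hp : 1 + a * (p.1 * p.2) > 0) :
    pdy (fun q : ℝ × ℝ => Real.sqrt (1 + a * (q.1 * q.2))) p
      = a * p.1 / (2 * Real.sqrt (1 + a * (p.1 * p.2))) := by
  have h : HasDerivAt (fun y : ℝ => 1 + a * (p.1 * y)) (a * (p.1 * 1)) p.2 :=
    (((hasDerivAt_id p.2).const_mul p.1).const_mul a).const_add 1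
  have := (h.sqrt hp.ne').deriv
  simpa [pdy] using this

/-- For `a ≠ 0`, the function `u(x,y) = √(1 + a·x·y)` solves the Țițeica PDE with
parameter `α = −a²/4` on the open set `{1 + a·x·y > 0}` (Section 8 of the paper). -/
theorem titeica_solution_sqrt_xy (a : ℝ) (ha : a ≠ 0) :
    ∀ p : ℝ × ℝ, 1 + a * (p.1 * p.2) > 0 →
      TiteicaPDE (-a ^ 2 / 4) (fun q : ℝ × ℝ => Real.sqrt (1 + a * (q.1 * q.2))) p := by
  rintro ⟨x, y⟩ hp
  have hp' : 0 < 1 + a * (x * y) := hp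
  have hs := Real.sqrt_pos.mpr hp'
  have hsq := Real.sq_sqrt hp'.le
  have hx : HasDerivAt (fun t : ℝ => 1 + a * (t * y)) (a * (1 * y)) x :=
    (((hasDerivAt_id x).mul_const y).const_mul a).const_add 1
  have hy : HasDerivAt (fun t : ℝ => 1 + a * (x * t)) (a * (x * 1)) y :=
    (((hasDerivAt_id y).const_mul x).const_mul a).const_add 1
  have ex : ∀ᶠ t in nhds x, 0 < 1 + a * (t * y) :=
    hx.continuousAt.eventually (lt_mem_nhds hp')
  have ey : ∀ᶠ t in nhds y, 0 < 1 + a * (x * t) :=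
    hy.continuousAt.eventually (lt_mem_nhds hp')
  have hne : (2 * Real.sqrt (1 + a * (x * y))) ≠ 0 := by positivity
  have hsx := (hx.sqrt hp'.ne').const_mul 2
  have hsy := (hy.sqrt hp'.ne').const_mul 2
  have hxx := ((hasDerivAt_const x (a * y)).div hsx hne).congr_of_eventuallyEq
    (f₁ := fun t => pdx (fun q : ℝ × ℝ => Real.sqrt (1 + a * (q.1 * q.2))) (t, y))
    (ex.mono fun t ht => pdx_sqrt_xy a (t, y) ht)
  have hyy := ((hasDerivAt_const y (a * x)).div hsy hne).congr_of_eventuallyEq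
    (f₁ := fun t => pdy (fun q : ℝ × ℝ => Real.sqrt (1 + a * (q.1 * q.2))) (x, t))
    (ey.mono fun t ht => pdy_sqrt_xy a (x, t) ht)
  have hxy := (((hasDerivAt_id y).const_mul a).div hsy hne).congr_of_eventuallyEq
    (f₁ := fun t => pdx (fun q : ℝ × ℝ => Real.sqrt (1 + a * (q.1 * q.2))) (x, t))
    (ey.mono fun t ht => pdx_sqrt_xy a (x, t) ht)
  unfold TiteicaPDE
  rw [pdx_sqrt_xy a (x, y) hp, pdy_sqrt_xy a (x, y) hp]
  rw [show pdx (pdx _) (x, y) = _ from hxx.deriv, show pdy (pdy _) (x, y) = _ from hyy.deriv,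
    show pdy (pdx _) (x, y) = _ from hxy.deriv]
  simp only [id]
  generalize Real.sqrt (1 + a * (x * y)) = s at *
  have hs0 : s ≠ 0 := hs.ne'
  have e1 : x * (a * y / (2 * s)) + y * (a * x / (2 * s)) - s = -1 / s := by
    field_simp
    linarith
  rw [e1]
  have hxy2 : a * x * y = s ^ 2 - 1 := by linarith
  have e2 : (a * 1 * (2 * s) - a * y * (2 * (a * (x * 1) / (2 * s)))) / (2 * s) ^ 2
      = a * (s ^ 2 + 1) / (4 * s ^ 3) := by
    field_simp
    linear_combination (-4) * hxy2
  have e3 : (0 * (2 * s) - a * y * (2 * (a * (1 * y) / (2 * s)))) / (2 * s) ^ 2 *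
      ((0 * (2 * s) - a * x * (2 * (a * (x * 1) / (2 * s)))) / (2 * s) ^ 2)
      = a ^ 2 * (a * x * y) ^ 2 / (16 * s ^ 6) := by
    field_simp
    ring
  rw [e2, e3, hxy2]
  field_simp
  ring
end

section
/- The function u : ℝ² → ℝ defined by u(x,y) = 1/(x² + y²) on the open set D = ℝ² ∖ {(0,0)} satisfies the Țițeica PDE with parameter α = −4/27 at every point of D. -/
theorem aux_deriv (c t : ℝ) :
    deriv (fun x : ℝ => 1 / (x ^ 2 + c ^ 2)) t = -2 * t / (t ^ 2 + c ^ 2) ^ 2 := by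
  by_cases h : t ^ 2 + c ^ 2 = 0
  · have ht : t = 0 := by nlinarith [sq_nonneg t, sq_nonneg c]
    have hc : c = 0 := by nlinarith [sq_nonneg t, sq_nonneg c]
    subst ht hc
    have : (fun x : ℝ => 1 / (x ^ 2 + (0:ℝ) ^ 2)) = fun x => x ^ (-2 : ℤ) := by
      funext x
      simp [zpow_neg]
    rw [this, deriv_zpow]
    simp
  · have h1 : HasDerivAt (fun x : ℝ => x ^ 2 + c ^ 2) (2 * t) t := by
      simpa using (hasDerivAt_pow 2 t).add_const (c ^ 2)
    have h2 := (h1.fun_inv h).deriv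
    simp only [one_div]
    rw [h2]
    ring

theorem aux_deriv2 (c t : ℝ) (h : t ^ 2 + c ^ 2 ≠ 0) :
    deriv (fun x : ℝ => -2 * x / (x ^ 2 + c ^ 2) ^ 2) t
      = (6 * t ^ 2 - 2 * c ^ 2) / (t ^ 2 + c ^ 2) ^ 3 := by
  have h1 : HasDerivAt (fun x : ℝ => x ^ 2 + c ^ 2) (2 * t) t := by
    simpa using (hasDerivAt_pow 2 t).add_const (c ^ 2)
  have h2 := (((hasDerivAt_id' t).const_mul (-2)).fun_div (h1.fun_pow 2) (pow_ne_zero 2 h)).deriv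
  rw [h2]
  field_simp
  push_cast
  ring

theorem aux_deriv3 (c t : ℝ) (h : c ^ 2 + t ^ 2 ≠ 0) :
    deriv (fun x : ℝ => -2 * c / (c ^ 2 + x ^ 2) ^ 2) t
      = 8 * c * t / (c ^ 2 + t ^ 2) ^ 3 := by
  have h1 : HasDerivAt (fun x : ℝ => c ^ 2 + x ^ 2) (2 * t) t := by
    simpa using (hasDerivAt_pow 2 t).const_add (c ^ 2)
  have h2 := ((hasDerivAt_const t (-2 * c)).fun_div (h1.fun_pow 2) (pow_ne_zero 2 h)).deriv
  rw [h2]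
  field_simp
  push_cast
  ring

/-- The function `u(x,y) = 1/(x² + y²)` solves the Țițeica PDE with `α = −4/27` on
`ℝ² ∖ {(0,0)}` (Section 8 of the paper). -/
theorem titeica_solution_inv_r2 :
    ∀ p : ℝ × ℝ, p ≠ (0, 0) →
      TiteicaPDE (-4 / 27) (fun q : ℝ × ℝ => 1 / (q.1 ^ 2 + q.2 ^ 2)) p := by
  rintro ⟨a, b⟩ hp
  have h : a ^ 2 + b ^ 2 ≠ 0 := by
    intro h
    apply hp
    have ha : a = 0 := by nlinarith [sq_nonneg a, sq_nonneg b]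
    have hb : b = 0 := by nlinarith [sq_nonneg a, sq_nonneg b]
    rw [ha, hb]
  have h' : b ^ 2 + a ^ 2 ≠ 0 := by rwa [add_comm]
  have hx : pdx (fun q : ℝ × ℝ => 1 / (q.1 ^ 2 + q.2 ^ 2))
      = fun q => -2 * q.1 / (q.1 ^ 2 + q.2 ^ 2) ^ 2 := by
    funext q
    exact aux_deriv q.2 q.1
  have hy : pdy (fun q : ℝ × ℝ => 1 / (q.1 ^ 2 + q.2 ^ 2))
      = fun q => -2 * q.2 / (q.2 ^ 2 + q.1 ^ 2) ^ 2 := by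
    funext q
    rw [← aux_deriv q.1 q.2]
    simp only [pdy, add_comm]
  unfold TiteicaPDE
  rw [hx, hy]
  simp only [pdx, pdy]
  rw [aux_deriv2 b a h, aux_deriv2 a b h', aux_deriv3 a b h, add_comm (b ^ 2) (a ^ 2)]
  field_simp
  ring
end

section
/- Let a ∈ ℝ, a ≠ 0. The function u(x,y) = √(1 + a·(x² + y²)), defined on the open set D = {(x,y) ∈ ℝ² : 1 + a·(x² + y²) > 0}, satisfies the Țițeica PDE with parameter α = a² at every point of D. -/
lemma aux_d (a x y : ℝ) (h : 0 < 1 + a * (x ^ 2 + y ^ 2)) :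
    HasDerivAt (fun t => Real.sqrt (1 + a * (t ^ 2 + y ^ 2)))
      (a * x / Real.sqrt (1 + a * (x ^ 2 + y ^ 2))) x := by
  have h1 : HasDerivAt (fun t : ℝ => 1 + a * (t ^ 2 + y ^ 2)) (a * (2 * x)) x := by
    have := (((hasDerivAt_pow 2 x).add_const (y ^ 2)).const_mul a).const_add 1
    simpa using this
  have h2 := h1.sqrt h.ne'
  convert h2 using 1
  have := (Real.sqrt_pos.2 h).ne'
  field_simp

lemma aux_ev (a x y : ℝ) (h : 0 < 1 + a * (x ^ 2 + y ^ 2)) :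
    ∀ᶠ t in nhds x, 0 < 1 + a * (t ^ 2 + y ^ 2) := by
  have hc : Continuous (fun t : ℝ => 1 + a * (t ^ 2 + y ^ 2)) := by fun_prop
  exact hc.continuousAt.eventually (lt_mem_nhds h)

lemma aux_x (a x y : ℝ) (h : 0 < 1 + a * (x ^ 2 + y ^ 2)) :
    pdx (fun q : ℝ × ℝ => Real.sqrt (1 + a * (q.1 ^ 2 + q.2 ^ 2))) (x, y)
      = a * x / Real.sqrt (1 + a * (x ^ 2 + y ^ 2)) :=
  (aux_d a x y h).deriv

lemma aux_y (a x y : ℝ) (h : 0 < 1 + a * (x ^ 2 + y ^ 2)) :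
    pdy (fun q : ℝ × ℝ => Real.sqrt (1 + a * (q.1 ^ 2 + q.2 ^ 2))) (x, y)
      = a * y / Real.sqrt (1 + a * (x ^ 2 + y ^ 2)) := by
  have h' : 0 < 1 + a * (y ^ 2 + x ^ 2) := by rwa [add_comm (y ^ 2)]
  have := (aux_d a y x h').deriv
  simp only [add_comm _ (x ^ 2)] at this
  exact this

/-- Derivative of `a t / u`. -/
lemma aux_dd (a x y : ℝ) (h : 0 < 1 + a * (x ^ 2 + y ^ 2)) :
    HasDerivAt (fun t => a * t / Real.sqrt (1 + a * (t ^ 2 + y ^ 2)))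
      (a * (1 + a * y ^ 2) / Real.sqrt (1 + a * (x ^ 2 + y ^ 2)) ^ 3) x := by
  have hs := (Real.sqrt_pos.2 h).ne'
  have h1 := ((hasDerivAt_id x).const_mul a).div (aux_d a x y h) hs
  refine h1.congr_deriv ?_
  have hq := Real.sq_sqrt h.le
  generalize Real.sqrt (1 + a * (x ^ 2 + y ^ 2)) = s at *
  simp only [id]
  field_simp
  rw [hq]
  ring

/-- Derivative of `a y / u` in the other variable. -/
lemma aux_dm (a x y : ℝ) (h : 0 < 1 + a * (x ^ 2 + y ^ 2)) :
    HasDerivAt (fun t => a * y / Real.sqrt (1 + a * (t ^ 2 + y ^ 2)))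
      (- (a ^ 2 * x * y) / Real.sqrt (1 + a * (x ^ 2 + y ^ 2)) ^ 3) x := by
  have hs := (Real.sqrt_pos.2 h).ne'
  have h1 := (hasDerivAt_const x (a * y)).div (aux_d a x y h) hs
  refine h1.congr_deriv ?_
  generalize Real.sqrt (1 + a * (x ^ 2 + y ^ 2)) = s at *
  field_simp
  ring

/-- For `a ≠ 0`, the function `u(x,y) = √(1 + a·(x² + y²))` solves the Țițeica PDE with
parameter `α = a²` on the open set `{1 + a·(x² + y²) > 0}` (Section 8 of the paper). -/
theorem titeica_solution_sqrt_r2 (a : ℝ) (ha : a ≠ 0) :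
    ∀ p : ℝ × ℝ, 1 + a * (p.1 ^ 2 + p.2 ^ 2) > 0 →
      TiteicaPDE (a ^ 2) (fun q : ℝ × ℝ => Real.sqrt (1 + a * (q.1 ^ 2 + q.2 ^ 2))) p := by
  rintro ⟨x, y⟩ h
  have h : 0 < 1 + a * (x ^ 2 + y ^ 2) := h
  have h' : 0 < 1 + a * (y ^ 2 + x ^ 2) := by rwa [add_comm (y ^ 2)]
  have hxx : pdx (pdx (fun q : ℝ × ℝ => Real.sqrt (1 + a * (q.1 ^ 2 + q.2 ^ 2)))) (x, y)
      = a * (1 + a * y ^ 2) / Real.sqrt (1 + a * (x ^ 2 + y ^ 2)) ^ 3 := by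
    refine HasDerivAt.deriv ((aux_dd a x y h).congr_of_eventuallyEq ?_)
    filter_upwards [aux_ev a x y h] with t ht
    exact aux_x a t y ht
  have hyy : pdy (pdy (fun q : ℝ × ℝ => Real.sqrt (1 + a * (q.1 ^ 2 + q.2 ^ 2)))) (x, y)
      = a * (1 + a * x ^ 2) / Real.sqrt (1 + a * (x ^ 2 + y ^ 2)) ^ 3 := by
    rw [add_comm (x ^ 2) (y ^ 2)]
    refine HasDerivAt.deriv ((aux_dd a y x h').congr_of_eventuallyEq ?_)
    filter_upwards [aux_ev a y x h'] with t ht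
    rw [add_comm (t ^ 2)] at ht ⊢
    exact aux_y a x t ht
  have hxy : pdy (pdx (fun q : ℝ × ℝ => Real.sqrt (1 + a * (q.1 ^ 2 + q.2 ^ 2)))) (x, y)
      = - (a ^ 2 * y * x) / Real.sqrt (1 + a * (x ^ 2 + y ^ 2)) ^ 3 := by
    rw [add_comm (x ^ 2) (y ^ 2)]
    refine HasDerivAt.deriv ((aux_dm a y x h').congr_of_eventuallyEq ?_)
    filter_upwards [aux_ev a y x h'] with t ht
    rw [add_comm (t ^ 2)] at ht ⊢
    exact aux_x a x t ht
  unfold TiteicaPDE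
  rw [hxx, hyy, hxy, aux_x a x y h, aux_y a x y h]
  have hs := (Real.sqrt_pos.2 h).ne'
  have hq := Real.sq_sqrt h.le
  dsimp only
  generalize Real.sqrt (1 + a * (x ^ 2 + y ^ 2)) = s at *
  have e1 : x * (a * x / s) + y * (a * y / s) - s = -1 / s := by
    field_simp
    rw [hq]
    ring
  have e2 : a * (1 + a * y ^ 2) / s ^ 3 * (a * (1 + a * x ^ 2) / s ^ 3)
      - (-(a ^ 2 * y * x) / s ^ 3) ^ 2 = a ^ 2 * s ^ 2 / s ^ 6 := by
    rw [hq]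
    field_simp
    ring
  rw [e1, e2]
  field_simp
end

section
/- Let α ∈ ℝ, let I ⊆ ℝ be an open interval, and let φ : ℝ → ℝ be C² on I. Define u(x,y) = φ(x·y). Then for every point (x,y) ∈ ℝ² with t = x·y ∈ I, the function u satisfies the Țițeica PDE with parameter α at (x,y) if and only if 2·t·φ'(t)·φ''(t) + φ'(t)² + α·(2·t·φ'(t) − φ(t))⁴ = 0. -/
/-- Reduction of the Țițeica PDE under the subgroup generated by
`X₁ − X₂ = x ∂/∂x − y ∂/∂y` (Section 8 of the paper): for `u(x,y) = φ(x·y)` with `φ` C² on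
an open interval `I`, and for any `(x,y)` with `t = x·y ∈ I`, the Țițeica PDE holds at
`(x,y)` iff `2·t·φ'(t)·φ''(t) + φ'(t)² + α·(2·t·φ'(t) − φ(t))⁴ = 0`. -/
theorem titeica_reduction_xy (α : ℝ) (I : Set ℝ) (hI : ∃ a b : ℝ, I = Set.Ioo a b)
    (φ : ℝ → ℝ) (hφ : ContDiffOn ℝ 2 φ I) :
    ∀ p : ℝ × ℝ, p.1 * p.2 ∈ I →
      (TiteicaPDE α (fun q : ℝ × ℝ => φ (q.1 * q.2)) p ↔
        2 * (p.1 * p.2) * deriv φ (p.1 * p.2) * deriv (deriv φ) (p.1 * p.2)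
          + (deriv φ (p.1 * p.2)) ^ 2
          + α * (2 * (p.1 * p.2) * deriv φ (p.1 * p.2) - φ (p.1 * p.2)) ^ 4 = 0) := by
  obtain ⟨a, b, rfl⟩ := hI
  rintro ⟨x, y⟩ hp
  have hx : pdx (fun q : ℝ × ℝ => φ (q.1 * q.2)) = fun q => q.2 * deriv φ (q.1 * q.2) := by
    funext q
    simpa [pdx, mul_comm] using deriv_comp_mul_left q.2 φ q.1
  have hy : pdy (fun q : ℝ × ℝ => φ (q.1 * q.2)) = fun q => q.1 * deriv φ (q.1 * q.2) := by
    funext q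
    simpa [pdy] using deriv_comp_mul_left q.1 φ q.2
  have hxx : pdx (fun q : ℝ × ℝ => q.2 * deriv φ (q.1 * q.2)) (x, y)
      = y * (y * deriv (deriv φ) (x * y)) := by
    have h := deriv_comp_mul_left y (deriv φ) x
    simp only [smul_eq_mul, mul_comm y x, mul_comm y (_ : ℝ)] at h
    simp only [pdx]
    rw [deriv_const_mul_field, h, mul_comm y (deriv (deriv φ) (x * y))]
  have hyy : pdy (fun q : ℝ × ℝ => q.1 * deriv φ (q.1 * q.2)) (x, y)
      = x * (x * deriv (deriv φ) (x * y)) := by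
    have h := deriv_comp_mul_left x (deriv φ) y
    simp only [smul_eq_mul] at h
    simp only [pdy]
    rw [deriv_const_mul_field, h]
  have hd : DifferentiableAt ℝ (deriv φ) (x * y) := by
    have h1 : ContDiffOn ℝ 1 (deriv φ) (Set.Ioo a b) :=
      hφ.deriv_of_isOpen isOpen_Ioo (by norm_num)
    exact (h1.differentiableOn (by norm_num)).differentiableAt (isOpen_Ioo.mem_nhds hp)
  have hxy : pdy (fun q : ℝ × ℝ => q.2 * deriv φ (q.1 * q.2)) (x, y)
      = deriv φ (x * y) + y * (deriv (deriv φ) (x * y) * x) := by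
    have h1 : HasDerivAt (fun z : ℝ => x * z) x y := by
      simpa using (hasDerivAt_id y).const_mul x
    have h2 : HasDerivAt (fun z : ℝ => deriv φ (x * z)) (deriv (deriv φ) (x * y) * x) y :=
      HasDerivAt.comp y hd.hasDerivAt h1
    have h3 := ((hasDerivAt_id y).mul h2).deriv
    simp only [id, one_mul] at h3
    exact h3
  unfold TiteicaPDE
  rw [hx, hy, hxx, hyy, hxy]
  constructor
  · intro h
    simp only at h ⊢
    linear_combination -h
  · intro h
    simp only at h ⊢
    linear_combination -h
end
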